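/- arXiv:2305.01792 — 2 statements merged into one kernel-verified Lean document; each statement's English description precedes it below -/
import Mathlib

section
/- Let θ ∈ (0, 1/2] be such that θ⁻¹ ≥ 2 is an integer, and let n ≥ 2 be an integer. Then every surjective isometry U : S_{T[θ,S_n]} → S_{T[θ,S_n]} of the unit sphere of T[θ, S_n] extends to a surjective linear isometry Ũ : T[θ, S_n] → T[θ, S_n], i.e., there is a surjective linear isometry Ũ with Ũ(x) = U(x) for all x ∈ S_{T[θ,S_n]}. -/
open scoped BigOperators

noncomputable section

/-- Projection of a finitely supported vector onto the coordinates in `E`. -/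
def tsProj (E : Finset ℕ+) (x : ℕ+ →₀ ℝ) : ℕ+ →₀ ℝ :=
  x.filter fun i => i ∈ E

/-- The Schreier families `S_n` on the positive integers:
`S₁` consists of the sets `F` with `|F| ≤ min F` (together with `∅`), and `S_{n+1}`
consists of unions `F₁ ∪ ⋯ ∪ F_d` of nonempty members `F₁ < ⋯ < F_d` of `S_n`
with `d ≤ min F₁` (together with `∅`). -/
def Schreier : ℕ → Set (Finset ℕ+)
  | 0 => {F | F.card ≤ 1}
  | 1 => {F | ∀ a ∈ F, F.card ≤ (a : ℕ)}
  | n + 2 =>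
      {F | F = ∅ ∨
        ∃ (d : ℕ) (G : Fin d → Finset ℕ+),
          0 < d ∧ (∀ i, G i ∈ Schreier (n + 1)) ∧ (∀ i, (G i).Nonempty) ∧
          (∀ i j : Fin d, i < j → ∀ a ∈ G i, ∀ b ∈ G j, a < b) ∧
          (∀ i, ∀ a ∈ G i, d ≤ (a : ℕ)) ∧ F = Finset.univ.biUnion G}

/-- A tuple of nonempty finite sets `E 0 < E 1 < ⋯` whose set of minima belongs to `S`. -/
def TsAdmissible (S : Set (Finset ℕ+)) {d : ℕ} (E : Fin d → Finset ℕ+) : Prop :=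
  (∀ i, (E i).Nonempty) ∧
  (∀ i j : Fin d, i < j → ∀ a ∈ E i, ∀ b ∈ E j, a < b) ∧
  ∃ μ : Fin d → ℕ+, (∀ i, IsLeast (↑(E i) : Set ℕ+) (μ i)) ∧
    Finset.univ.image μ ∈ S

/-- The iterated norms `‖·‖_m` in the construction of the Tsirelson norm:
`‖x‖₀` is the supremum norm and
`‖x‖_{m+1} = max(‖x‖_m, sup{θ ∑ᵢ ‖Eᵢ x‖_m : E₁ < ⋯ < E_d, {min Eᵢ} ∈ S})`. -/
def tnormAux (θ : ℝ) (S : Set (Finset ℕ+)) : ℕ → (ℕ+ →₀ ℝ) → ℝ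
  | 0, x => ⨆ i, |x i|
  | m + 1, x =>
      max (tnormAux θ S m x)
        (sSup {r : ℝ | ∃ (d : ℕ) (E : Fin d → Finset ℕ+), TsAdmissible S E ∧
          r = θ * ∑ i, tnormAux θ S m (tsProj (E i) x)})

/-- The Tsirelson norm `‖x‖_{θ,S} = sup_m ‖x‖_m` on `c₀₀`. -/
def tnorm (θ : ℝ) (S : Set (Finset ℕ+)) (x : ℕ+ →₀ ℝ) : ℝ :=
  ⨆ m : ℕ, tnormAux θ S m x

/-- `X`, together with the sequence `e` of unit vectors, is (a realization of) the
Tsirelson space `T[θ, S_n]`: a Banach space containing `c₀₀` isometrically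
(w.r.t. the Tsirelson norm) as a dense subspace, in which `(e i)` is a
(1-unconditional) basis, i.e. every `x` has a unique expansion `x = ∑ᵢ aᵢ eᵢ`. -/
structure IsTsirelsonSpace (θ : ℝ) (n : ℕ) (X : Type*) [NormedAddCommGroup X]
    [NormedSpace ℝ X] (e : ℕ+ → X) : Prop where
  complete : CompleteSpace X
  norm_embed : ∀ a : ℕ+ →₀ ℝ, ‖a.sum fun i c => c • e i‖ = tnorm θ (Schreier n) a
  dense_embed : DenseRange fun a : ℕ+ →₀ ℝ => a.sum fun i c => c • e i
  expansion : ∀ x : X, ∃! a : ℕ+ → ℝ, HasSum (fun i => a i • e i) x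


lemma tsProj_apply (E : Finset ℕ+) (x : ℕ+ →₀ ℝ) (i : ℕ+) :
    tsProj E x i = if i ∈ E then x i else 0 := by
  simp [tsProj, Finsupp.filter_apply]

def tsl1 (x : ℕ+ →₀ ℝ) : ℝ := ∑ i ∈ x.support, |x i|

lemma abs_le_tsl1 (x : ℕ+ →₀ ℝ) (i : ℕ+) : |x i| ≤ tsl1 x := by
  by_cases h : i ∈ x.support
  · exact Finset.single_le_sum (f := fun i => |x i|) (fun j _ => abs_nonneg _) h
  · have : x i = 0 := by simpa using h
    rw [this, abs_zero]
    exact Finset.sum_nonneg fun j _ => abs_nonneg _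

lemma tsl1_nonneg (x : ℕ+ →₀ ℝ) : 0 ≤ tsl1 x := Finset.sum_nonneg fun j _ => abs_nonneg _

lemma tsl1_proj (E : Finset ℕ+) (x : ℕ+ →₀ ℝ) :
    tsl1 (tsProj E x) = ∑ i ∈ x.support, if i ∈ E then |x i| else 0 := by
  unfold tsl1
  have hs : (tsProj E x).support ⊆ x.support := by
    intro i hi
    simp only [Finsupp.mem_support_iff, tsProj_apply] at hi ⊢
    intro h; simp [h] at hi
  rw [Finset.sum_subset hs]
  · refine Finset.sum_congr rfl fun i _ => ?_
    rw [tsProj_apply]; split_ifs <;> simp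
  · intro i _ hi
    simpa using hi

lemma sum_ite_disj {d : ℕ} (E : Fin d → Finset ℕ+)
    (hE : ∀ i j : Fin d, i < j → ∀ a ∈ E i, ∀ b ∈ E j, a < b) (i : ℕ+) (c : ℝ) (hc : 0 ≤ c) :
    ∑ l, (if i ∈ E l then c else 0) ≤ c := by
  by_cases h : ∃ l, i ∈ E l
  · obtain ⟨l, hl⟩ := h
    rw [Finset.sum_eq_single l]
    · simp [hl]
    · intro l' _ hne
      rw [if_neg]
      intro hl'
      rcases lt_or_gt_of_ne hne with h | h
      · exact lt_irrefl _ (hE _ _ h _ hl' _ hl)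
      · exact lt_irrefl _ (hE _ _ h _ hl _ hl')
    · simp
  · push Not at h
    simp [h, hc]

section aux
variable {θ : ℝ} {S : Set (Finset ℕ+)}

lemma aux_nonneg (m : ℕ) (x : ℕ+ →₀ ℝ) : 0 ≤ tnormAux θ S m x := by
  induction m generalizing x with
  | zero => exact Real.iSup_nonneg fun i => abs_nonneg _
  | succ m ih => exact le_max_of_le_left (ih x)

lemma coord_le_aux (m : ℕ) (x : ℕ+ →₀ ℝ) (i : ℕ+) : |x i| ≤ tnormAux θ S m x := by
  induction m generalizing x with
  | zero =>
    refine le_ciSup (f := fun i => |x i|) ⟨tsl1 x, ?_⟩ i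
    rintro _ ⟨j, rfl⟩
    exact abs_le_tsl1 x j
  | succ m ih => exact le_max_of_le_left (ih x)

lemma aux_succ_le (m : ℕ) (x : ℕ+ →₀ ℝ) (C : ℝ) (hC : tnormAux θ S m x ≤ C)
    (h : ∀ (d : ℕ) (E : Fin d → Finset ℕ+), TsAdmissible S E →
      θ * ∑ i, tnormAux θ S m (tsProj (E i) x) ≤ C) : tnormAux θ S (m+1) x ≤ C := by
  refine max_le hC (Real.sSup_le ?_ ((aux_nonneg m x).trans hC))
  rintro r ⟨d, E, hE, rfl⟩
  exact h d E hE

lemma sum_le_tsl1 (h0 : 0 ≤ θ) (h1 : θ ≤ 1) (m : ℕ)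
    (ih : ∀ x, tnormAux θ S m x ≤ tsl1 x) (x : ℕ+ →₀ ℝ) (d : ℕ) (E : Fin d → Finset ℕ+)
    (hE : TsAdmissible S E) : θ * ∑ i, tnormAux θ S m (tsProj (E i) x) ≤ tsl1 x := by
  have h2 : ∑ i, tnormAux θ S m (tsProj (E i) x) ≤ tsl1 x := by
    calc _ ≤ ∑ i, tsl1 (tsProj (E i) x) := Finset.sum_le_sum fun i _ => ih _
      _ = ∑ j ∈ x.support, ∑ l, (if j ∈ E l then |x j| else 0) := by
        simp_rw [tsl1_proj]; rw [Finset.sum_comm]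
      _ ≤ _ := Finset.sum_le_sum fun j _ => sum_ite_disj E hE.2.1 j _ (abs_nonneg _)
  have h3 : 0 ≤ ∑ i, tnormAux θ S m (tsProj (E i) x) :=
    Finset.sum_nonneg fun i _ => aux_nonneg _ _
  nlinarith

lemma aux_le_tsl1 (h0 : 0 ≤ θ) (h1 : θ ≤ 1) (m : ℕ) (x : ℕ+ →₀ ℝ) :
    tnormAux θ S m x ≤ tsl1 x := by
  induction m generalizing x with
  | zero => exact Real.iSup_le (fun i => abs_le_tsl1 x i) (tsl1_nonneg x)
  | succ m ih => exact aux_succ_le m x _ (ih x) fun d E hE => sum_le_tsl1 h0 h1 m ih x d E hE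

lemma le_aux_succ (h0 : 0 ≤ θ) (h1 : θ ≤ 1) (m : ℕ) (x : ℕ+ →₀ ℝ) (d : ℕ)
    (E : Fin d → Finset ℕ+) (hE : TsAdmissible S E) :
    θ * ∑ i, tnormAux θ S m (tsProj (E i) x) ≤ tnormAux θ S (m+1) x := by
  refine le_max_of_le_right (le_csSup ⟨tsl1 x, ?_⟩ ⟨d, E, hE, rfl⟩)
  rintro r ⟨d, E, hE, rfl⟩
  exact sum_le_tsl1 h0 h1 m (aux_le_tsl1 h0 h1 m) x d E hE

lemma aux_mono (h0 : 0 ≤ θ) (h1 : θ ≤ 1) (m : ℕ) (x y : ℕ+ →₀ ℝ) (h : ∀ i, |x i| ≤ |y i|) :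
    tnormAux θ S m x ≤ tnormAux θ S m y := by
  induction m generalizing x y with
  | zero => exact Real.iSup_le (fun i => (h i).trans (coord_le_aux 0 y i)) (aux_nonneg 0 y)
  | succ m ih =>
    refine aux_succ_le m x _ ((ih x y h).trans (le_max_left _ _)) fun d E hE => ?_
    refine le_trans ?_ (le_aux_succ h0 h1 m y d E hE)
    refine mul_le_mul_of_nonneg_left (Finset.sum_le_sum fun l _ => ih _ _ fun i => ?_) h0
    simp only [tsProj_apply]
    split_ifs
    · exact h i
    · simp

lemma aux_add_single (h0 : 0 ≤ θ) (h1 : θ ≤ 1) (m : ℕ) (i : ℕ+) (a : ℝ) (y : ℕ+ →₀ ℝ) :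
    tnormAux θ S m (Finsupp.single i a + y) ≤ max |a + y i| (θ * |a| + tnormAux θ S m y) := by
  have ha : 0 ≤ θ * |a| := mul_nonneg h0 (abs_nonneg a)
  induction m generalizing y with
  | zero =>
    refine Real.iSup_le (fun j => ?_) (le_max_of_le_left (abs_nonneg _))
    by_cases hj : j = i
    · subst hj; simp
    · refine le_max_of_le_right ?_
      have := coord_le_aux (θ := θ) (S := S) 0 y j
      simp only [Finsupp.add_apply, Finsupp.single_apply, if_neg (Ne.symm hj), zero_add]
      linarith
  | succ m ih =>
    refine aux_succ_le m _ _ ((ih y).trans (max_le_max le_rfl ?_)) fun d E hE => ?_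
    · have : tnormAux θ S m y ≤ tnormAux θ S (m+1) y := le_max_left _ _
      linarith
    refine le_max_of_le_right ?_
    have key : ∀ l, tnormAux θ S m (tsProj (E l) (Finsupp.single i a + y)) ≤
        (if i ∈ E l then |a| else 0) + tnormAux θ S m (tsProj (E l) y) := by
      intro l
      split_ifs with hi
      · have : tsProj (E l) (Finsupp.single i a + y) = Finsupp.single i a + tsProj (E l) y := by
          ext j
          simp only [tsProj_apply, Finsupp.add_apply, Finsupp.single_apply]
          by_cases hj : i = j
          · subst hj; simp [hi]
          · simp [hj]
        rw [this]
        refine (ih _).trans (max_le ?_ ?_)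
        · exact (abs_add_le _ _).trans (add_le_add le_rfl (coord_le_aux m _ i))
        · have := abs_nonneg a
          nlinarith
      · have : tsProj (E l) (Finsupp.single i a + y) = tsProj (E l) y := by
          ext j
          simp only [tsProj_apply, Finsupp.add_apply, Finsupp.single_apply]
          by_cases hj : i = j
          · subst hj; simp [hi]
          · simp [hj]
        rw [this, zero_add]
    have h2 := Finset.sum_le_sum fun l (_ : l ∈ Finset.univ) => key l
    rw [Finset.sum_add_distrib] at h2
    have h3 := sum_ite_disj E hE.2.1 i |a| (abs_nonneg a)
    have h4 := le_aux_succ h0 h1 m y d E hE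
    calc _ ≤ θ * (|a| + ∑ l, tnormAux θ S m (tsProj (E l) y)) :=
          mul_le_mul_of_nonneg_left (by linarith) h0
      _ ≤ _ := by rw [mul_add]; linarith

lemma aux_le_tnorm (h0 : 0 ≤ θ) (h1 : θ ≤ 1) (m : ℕ) (x : ℕ+ →₀ ℝ) :
    tnormAux θ S m x ≤ tnorm θ S x := by
  refine le_ciSup (f := fun m => tnormAux θ S m x) ⟨tsl1 x, ?_⟩ m
  rintro _ ⟨j, rfl⟩
  exact aux_le_tsl1 h0 h1 j x

lemma coord_le_tnorm (h0 : 0 ≤ θ) (h1 : θ ≤ 1) (x : ℕ+ →₀ ℝ) (i : ℕ+) :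
    |x i| ≤ tnorm θ S x := (coord_le_aux 0 x i).trans (aux_le_tnorm h0 h1 0 x)

lemma tnorm_mono (h0 : 0 ≤ θ) (h1 : θ ≤ 1) (x y : ℕ+ →₀ ℝ) (h : ∀ i, |x i| ≤ |y i|) :
    tnorm θ S x ≤ tnorm θ S y :=
  ciSup_le fun m => (aux_mono h0 h1 m x y h).trans (aux_le_tnorm h0 h1 m y)

lemma tnorm_add_single (h0 : 0 ≤ θ) (h1 : θ ≤ 1) (i : ℕ+) (a : ℝ) (y : ℕ+ →₀ ℝ) :
    tnorm θ S (Finsupp.single i a + y) ≤ max |a + y i| (θ * |a| + tnorm θ S y) :=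
  ciSup_le fun m => (aux_add_single h0 h1 m i a y).trans
    (max_le_max le_rfl (add_le_add le_rfl (aux_le_tnorm h0 h1 m y)))

lemma tnorm_card_le (h0 : 0 ≤ θ) (h1 : θ ≤ 1) (k : ℕ) (hk : θ * k ≤ 1) (x : ℕ+ →₀ ℝ)
    (hx : x.support.card ≤ k) (C : ℝ) (hC : ∀ i, |x i| ≤ C) : tnorm θ S x ≤ C := by
  have hC0 : 0 ≤ C := (abs_nonneg _).trans (hC 1)
  refine ciSup_le fun m => ?_
  induction m generalizing x with
  | zero => exact Real.iSup_le hC hC0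
  | succ m ih =>
    refine aux_succ_le m _ _ (ih x hx hC) fun d E hE => ?_
    have hb : ∀ l, tnormAux θ S m (tsProj (E l) x) ≤
        ∑ i ∈ x.support, if i ∈ E l then C else 0 := by
      intro l
      by_cases h : ∃ i ∈ x.support, i ∈ E l
      · obtain ⟨i, hi, hil⟩ := h
        have h5 : tnormAux θ S m (tsProj (E l) x) ≤ tnormAux θ S m x := by
          refine aux_mono h0 h1 m _ _ fun j => ?_
          rw [tsProj_apply]; split_ifs <;> simp
        refine (h5.trans (ih x hx hC)).trans ?_
        calc C = if i ∈ E l then C else 0 := by simp [hil]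
          _ ≤ _ := Finset.single_le_sum (f := fun i => if i ∈ E l then C else 0)
            (fun j _ => by split_ifs <;> simp [hC0]) hi
      · push Not at h
        have : tsProj (E l) x = 0 := by
          ext j; rw [tsProj_apply]
          split_ifs with hj
          · by_contra hne
            exact h j (by simpa using hne) hj
          · rfl
        rw [this]
        refine (aux_le_tsl1 h0 h1 m 0).trans ?_
        simp only [tsl1, Finsupp.support_zero, Finset.sum_empty]
        exact Finset.sum_nonneg fun j _ => by split_ifs <;> simp [hC0]
    have h2 := Finset.sum_le_sum fun l (_ : l ∈ Finset.univ) => hb l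
    rw [Finset.sum_comm] at h2
    have h3 : ∑ i ∈ x.support, ∑ l, (if i ∈ E l then C else 0) ≤ x.support.card * C := by
      rw [← nsmul_eq_mul]
      exact Finset.sum_le_card_nsmul _ _ _ fun i _ => sum_ite_disj E hE.2.1 i C hC0
    have h4 : (x.support.card : ℝ) ≤ k := by exact_mod_cast hx
    calc _ ≤ θ * (k * C) := mul_le_mul_of_nonneg_left (by nlinarith) h0
      _ ≤ C := by nlinarith

end aux

lemma sch_empty (n : ℕ) : (∅ : Finset ℕ+) ∈ Schreier n := by
  match n with
  | 0 => simp [Schreier]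
  | 1 => simp [Schreier]
  | n + 2 => exact Or.inl rfl

lemma sch_blocks (s d : ℕ) (G : Fin d → Finset ℕ+) (h1 : ∀ i, G i ∈ Schreier (s + 1))
    (h2 : ∀ i j : Fin d, i < j → ∀ a ∈ G i, ∀ b ∈ G j, a < b)
    (h3 : ∀ i, ∀ a ∈ G i, d ≤ (a : ℕ)) : Finset.univ.biUnion G ∈ Schreier (s + 2) := by
  classical
  set I : Finset (Fin d) := Finset.univ.filter fun i => (G i).Nonempty with hI
  have hcard : I.card ≤ d := by simpa using Finset.card_le_univ I
  have hmem : ∀ i : Fin I.card, (G (I.orderEmbOfFin rfl i)).Nonempty := by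
    intro i
    have := I.orderEmbOfFin_mem rfl i
    exact (Finset.mem_filter.mp this).2
  have hun : Finset.univ.biUnion G = Finset.univ.biUnion fun i => G (I.orderEmbOfFin rfl i) := by
    ext a
    simp only [Finset.mem_biUnion, Finset.mem_univ, true_and]
    constructor
    · rintro ⟨i, hi⟩
      have hiI : i ∈ I := by simp only [hI, Finset.mem_filter, Finset.mem_univ, true_and]; exact ⟨a, hi⟩
      have : i ∈ Set.range (I.orderEmbOfFin rfl) := by rw [Finset.range_orderEmbOfFin]; exact hiI
      obtain ⟨l, rfl⟩ := this
      exact ⟨l, hi⟩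
    · rintro ⟨l, hl⟩
      exact ⟨_, hl⟩
  by_cases h0 : I.card = 0
  · left
    rw [hun]
    ext a
    simp only [Finset.mem_biUnion, Finset.mem_univ, true_and, Finset.notMem_empty, iff_false]
    rintro ⟨l, _⟩
    exact absurd l.2 (by omega)
  · right
    refine ⟨I.card, fun i => G (I.orderEmbOfFin rfl i), Nat.pos_of_ne_zero h0, fun i => h1 _, hmem,
      fun i j hij => h2 _ _ ((I.orderEmbOfFin rfl).strictMono hij), fun i a ha => ?_, hun⟩
    exact hcard.trans (h3 _ a ha)

lemma sch_hered (s : ℕ) (F F' : Finset ℕ+) (hF : F ∈ Schreier (s + 1)) (h : F' ⊆ F) :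
    F' ∈ Schreier (s + 1) := by
  classical
  induction s generalizing F F' with
  | zero =>
    intro a ha
    exact (Finset.card_le_card h).trans (hF a (h ha))
  | succ s ih =>
    rcases hF with rfl | ⟨d, G, hd, h1, h2, h3, h4, rfl⟩
    · left; exact Finset.subset_empty.mp h
    · have : F' = Finset.univ.biUnion fun i => G i ∩ F' := by
        ext a
        simp only [Finset.mem_biUnion, Finset.mem_univ, true_and, Finset.mem_inter]
        constructor
        · intro ha
          obtain ⟨i, -, hi⟩ := Finset.mem_biUnion.mp (h ha)
          exact ⟨i, hi, ha⟩
        · rintro ⟨i, _, ha⟩; exact ha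
      rw [this]
      refine sch_blocks s d _ (fun i => ih _ _ (h1 i) Finset.inter_subset_left) ?_ ?_
      · intro i j hij a ha b hb
        exact h3 i j hij a (Finset.mem_inter.mp ha).1 b (Finset.mem_inter.mp hb).1
      · intro i a ha
        exact h4 i a (Finset.mem_inter.mp ha).1

/-- Adding one more block. -/
lemma sch_snoc (s d : ℕ) (G : Fin d → Finset ℕ+) (B : Finset ℕ+)
    (h1 : ∀ i, G i ∈ Schreier (s + 1)) (hB : B ∈ Schreier (s + 1))
    (h2 : ∀ i j : Fin d, i < j → ∀ a ∈ G i, ∀ b ∈ G j, a < b)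
    (h2' : ∀ i, ∀ a ∈ G i, ∀ b ∈ B, a < b)
    (h3 : ∀ i, ∀ a ∈ G i, d + 1 ≤ (a : ℕ)) (h3' : ∀ a ∈ B, d + 1 ≤ (a : ℕ)) :
    Finset.univ.biUnion G ∪ B ∈ Schreier (s + 2) := by
  have : Finset.univ.biUnion G ∪ B =
      Finset.univ.biUnion (Fin.snoc (α := fun _ => Finset ℕ+) G B) := by
    ext a
    simp only [Finset.mem_union, Finset.mem_biUnion, Finset.mem_univ, true_and]
    rw [Fin.exists_fin_succ']
    simp
  rw [this]
  refine sch_blocks s (d+1) _ ?_ ?_ ?_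
  · intro i
    refine Fin.lastCases ?_ (fun i => ?_) i
    · simpa using hB
    · simpa using h1 i
  · intro i j
    refine Fin.lastCases ?_ (fun i => ?_) i
    · intro h
      exact absurd (Fin.le_last j) (not_le.mpr h)
    · refine Fin.lastCases ?_ (fun j => ?_) j
      · intro _
        simpa using h2' i
      · intro h
        simpa using h2 i j (by simpa using h)
  · intro i
    refine Fin.lastCases ?_ (fun i => ?_) i
    · simpa using h3'
    · simpa using h3 i

lemma sch_one (s : ℕ) (F : Finset ℕ+) (hF : ∀ a ∈ F, F.card ≤ (a : ℕ)) :
    F ∈ Schreier (s + 1) := by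
  induction s with
  | zero => exact hF
  | succ s ih =>
    have := sch_snoc s 0 Fin.elim0 F (fun i => i.elim0) ih (fun i => i.elim0) (fun i => i.elim0)
      (fun i => i.elim0) (fun a _ => a.2)
    simpa using this

lemma sch_has_one (s : ℕ) (F : Finset ℕ+) (hF : F ∈ Schreier (s + 1)) (h : 1 ∈ F) :
    F.card ≤ 1 := by
  induction s generalizing F with
  | zero => exact hF 1 h
  | succ s ih =>
    rcases hF with rfl | ⟨d, G, hd, h1, h2, h3, h4, rfl⟩
    · simp
    · obtain ⟨i, -, hi⟩ := Finset.mem_biUnion.mp h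
      have hd1 : d ≤ 1 := h4 i 1 hi
      obtain rfl : d = 1 := by omega
      have : Finset.univ.biUnion G = G i := by
        rw [Subsingleton.elim i 0]
        simp
      rw [this]
      exact ih _ (h1 i) hi

/-- Dropping the minimum makes room for a whole far block. -/
lemma sch_drop_min (s : ℕ) (J B : Finset ℕ+) (j : ℕ+) (hJ : J ∈ Schreier (s + 2))
    (hj : IsLeast (↑J : Set ℕ+) j) (hB : ∀ a ∈ B, B.card ≤ (a : ℕ))
    (hJB : ∀ a ∈ J, ∀ b ∈ B, a < b) : (J.erase j) ∪ B ∈ Schreier (s + 2) := by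
  rcases hJ with rfl | ⟨d, G, hd, h1, h2, h3, h4, rfl⟩
  · exact absurd hj.1 (by simp)
  · have hjm : j ∈ Finset.univ.biUnion G := hj.1
    obtain ⟨i₀, -, hi₀⟩ := Finset.mem_biUnion.mp hjm
    have hdj : d ≤ (j : ℕ) := h4 _ _ hi₀
    have : (Finset.univ.biUnion G).erase j = Finset.univ.biUnion fun i => (G i).erase j := by
      ext a
      simp only [Finset.mem_erase, Finset.mem_biUnion, Finset.mem_univ, true_and]
      tauto
    rw [this]
    refine sch_snoc s d _ B (fun i => sch_hered s _ _ (h1 i) (Finset.erase_subset _ _))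
      (sch_one s B hB) ?_ ?_ ?_ ?_
    · intro i i' hii a ha b hb
      exact h3 i i' hii a (Finset.mem_of_mem_erase ha) b (Finset.mem_of_mem_erase hb)
    · intro i a ha b hb
      exact hJB a (Finset.mem_biUnion.mpr ⟨i, Finset.mem_univ _, Finset.mem_of_mem_erase ha⟩) b hb
    · intro i a ha
      have h5 : j ≤ a := hj.2 (Finset.mem_coe.mpr
        (Finset.mem_biUnion.mpr ⟨i, Finset.mem_univ _, Finset.mem_of_mem_erase ha⟩))
      have h6 : j < a := lt_of_le_of_ne h5 (Finset.ne_of_mem_erase ha).symm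
      have : (j : ℕ) < a := h6
      omega
    · intro b hb
      have : (j : ℕ) < b := hJB j hjm b hb
      omega

lemma sch_drop_min' (s : ℕ) (J B : Finset ℕ+) (j : ℕ+) (hJ : J ∈ Schreier (s + 1))
    (hj : IsLeast (↑J : Set ℕ+) j) (hB2 : B.card = 2) (hB : ∀ a ∈ B, B.card ≤ (a : ℕ))
    (hJB : ∀ a ∈ J, ∀ b ∈ B, a < b) : (J.erase j) ∪ B ∈ Schreier (s + 1) := by
  cases s with
  | succ s => exact sch_drop_min s J B j hJ hj hB hJB
  | zero =>
    have hjm : j ∈ J := hj.1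
    have hJc : J.card ≤ (j : ℕ) := hJ j hjm
    intro a ha
    have hc : ((J.erase j) ∪ B).card ≤ J.card - 1 + 2 := by
      refine (Finset.card_union_le _ _).trans ?_
      rw [Finset.card_erase_of_mem hjm, hB2]
    have hpos : 0 < J.card := Finset.card_pos.mpr ⟨j, hjm⟩
    have : (j : ℕ) < a := by
      change j < a
      rcases Finset.mem_union.mp ha with h | h
      · exact lt_of_le_of_ne (hj.2 (Finset.mem_coe.mpr (Finset.mem_of_mem_erase h)))
          (Finset.ne_of_mem_erase h).symm
      · exact hJB j hjm a h
    omega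

/-- The combinatorial dichotomy. -/
lemma sch_comb (s : ℕ) (J : Finset ℕ+) (j : ℕ+) (hJ : J ∈ Schreier (s + 2))
    (hj : IsLeast (↑J : Set ℕ+) j) (hj2 : 2 ≤ (j : ℕ)) :
    (∀ B : Finset ℕ+, B.card = 2 → (∀ a ∈ B, B.card ≤ (a : ℕ)) → (∀ a ∈ J, ∀ b ∈ B, a < b) →
      J ∪ B ∈ Schreier (s + 2)) ∨
    ∃ L ⊆ J, ∃ b ∈ L, j ∉ L ∧ ∀ B : Finset ℕ+, B.card = 2 → (∀ a ∈ B, B.card ≤ (a : ℕ)) →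
      (∀ a ∈ J, ∀ b ∈ B, a < b) → (J \ L) ∪ B ∈ Schreier (s + 2) ∧
      {j, b} ∪ B ∈ Schreier (s + 2) ∧ (insert j (L.erase b)) ∪ B ∈ Schreier (s + 2) := by
  have hjm' : j ∈ J := hj.1
  rcases hJ with rfl | ⟨d, G, hd, h1, h2, h3, h4, rfl⟩
  · exact absurd hj.1 (by simp)
  obtain ⟨i₀, -, hi₀⟩ := Finset.mem_biUnion.mp hjm'
  have hmem : ∀ i, ∀ a ∈ G i, a ∈ Finset.univ.biUnion G := fun i a ha =>
    Finset.mem_biUnion.mpr ⟨i, Finset.mem_univ _, ha⟩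
  have hle : ∀ i, ∀ a ∈ G i, (j : ℕ) ≤ a := fun i a ha => hj.2 (Finset.mem_coe.mpr (hmem i a ha))
  have hdj : d ≤ (j : ℕ) := h4 _ _ hi₀
  rcases hdj.lt_or_eq with hlt | heq
  · left
    intro B hB2 hB hJB
    refine sch_snoc s d G B h1 (sch_one s B hB) h3 (fun i a ha => hJB a (hmem i a ha)) ?_ ?_
    · intro i a ha
      have := hle i a ha
      omega
    · intro b hb
      have : (j : ℕ) < b := hJB j hjm' b hb
      omega
  · right
    obtain ⟨d, rfl⟩ : ∃ d', d = d' + 1 := ⟨d - 1, by omega⟩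
    set L := G (Fin.last d) with hL
    have hLne : L.Nonempty := h2 _
    set b := L.min' hLne with hb
    have hbL : b ∈ L := L.min'_mem hLne
    have hbleast : IsLeast (↑L : Set ℕ+) b := L.isLeast_min' hLne
    -- j is in an earlier block
    have h0last : (0 : Fin (d+1)) < Fin.last d := by
      rw [Fin.lt_def]; simp; omega
    have hjlt : ∀ a ∈ L, j < a := by
      obtain ⟨c, hc⟩ := h2 0
      intro a ha
      exact lt_of_le_of_lt (hj.2 (Finset.mem_coe.mpr (hmem 0 c hc))) (h3 0 _ h0last c hc a ha)
    refine ⟨L, fun a ha => hmem _ a ha, b, hbL, fun h => lt_irrefl _ (hjlt j h), ?_⟩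
    intro B hB2 hB hJB
    have hLB : ∀ a ∈ L, ∀ b ∈ B, a < b := fun a ha => hJB a (hmem _ a ha)
    have hjB : ∀ b ∈ B, (j : ℕ) < b := fun b hb => hJB j hjm' b hb
    have hjL : ∀ a ∈ L, (j : ℕ) < a := fun a ha => hjlt a ha
    have two : ∀ K : Finset ℕ+, K ∈ Schreier (s + 1) → (∀ a ∈ K, j < a) →
        {j} ∪ K ∈ Schreier (s + 2) := by
      intro K hK hjK
      have := sch_snoc s 1 (fun _ => {j}) K (fun _ => sch_one s _ (by simpa using by omega)) hK
        (fun i i' hii => absurd hii (by rw [Subsingleton.elim i i']; exact lt_irrefl _))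
        (fun i a ha b hb => by rw [Finset.mem_singleton.mp ha]; exact hjK b hb)
        (fun i a ha => by rw [Finset.mem_singleton.mp ha]; exact hj2)
        (fun a ha => by have : (j : ℕ) < a := hjK a ha
                        omega)
      simpa using this
    refine ⟨?_, ?_, ?_⟩
    · have : (Finset.univ.biUnion G) \ L = Finset.univ.biUnion fun i : Fin d => G i.castSucc := by
        ext a
        simp only [Finset.mem_sdiff, Finset.mem_biUnion, Finset.mem_univ, true_and]
        rw [Fin.exists_fin_succ']
        constructor
        · rintro ⟨h | h, h'⟩
          · exact h
          · exact absurd h h'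
        · rintro ⟨i, hi⟩
          exact ⟨Or.inl ⟨i, hi⟩, fun h => lt_irrefl _ (h3 _ _ (Fin.castSucc_lt_last i) a hi a h)⟩
      rw [this]
      refine sch_snoc s d _ B (fun i => h1 _) (sch_one s B hB)
        (fun i i' hii => h3 _ _ (by simpa using hii)) (fun i a ha => hJB a (hmem _ a ha))
        (fun i a ha => h4 _ a ha) (fun a ha => ?_)
      have := hjB a ha
      omega
    · have := two ({b} ∪ B) (sch_one s _ ?_) ?_
      · rw [← Finset.union_assoc] at this
        exact this
      · intro a ha
        have hc : ({b} ∪ B).card ≤ 3 := (Finset.card_union_le _ _).trans (by simp [hB2])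
        have : (j : ℕ) < a := by
          rcases Finset.mem_union.mp ha with h | h
          · rw [Finset.mem_singleton.mp h]; exact hjL b hbL
          · exact hjB a h
        omega
      · intro a ha
        rcases Finset.mem_union.mp ha with h | h
        · rw [Finset.mem_singleton.mp h]; exact hjL b hbL
        · exact hjB a h
    · have := two (L.erase b ∪ B) (sch_drop_min' s L B b (h1 _) hbleast hB2 hB hLB) ?_
      · rw [Finset.insert_eq, Finset.union_assoc]
        exact this
      · intro a ha
        rcases Finset.mem_union.mp ha with h | h
        · exact hjL a (Finset.mem_of_mem_erase h)
        · exact hjB a h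

section lower
variable {θ : ℝ} {S : Set (Finset ℕ+)}

def AdmFam (J : Finset ℕ+) (E : ℕ+ → Finset ℕ+) : Prop :=
  (∀ j ∈ J, IsLeast (↑(E j) : Set ℕ+) j) ∧
  ∀ j ∈ J, ∀ j' ∈ J, j < j' → ∀ a ∈ E j, ∀ b ∈ E j', a < b

lemma adm_lb (h0 : 0 ≤ θ) (h1 : θ ≤ 1) (m : ℕ) (x : ℕ+ →₀ ℝ) (J : Finset ℕ+) (hJ : J ∈ S)
    (E : ℕ+ → Finset ℕ+) (hE : AdmFam J E) :
    θ * ∑ j ∈ J, tnormAux θ S m (tsProj (E j) x) ≤ tnormAux θ S (m+1) x := by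
  set f := J.orderEmbOfFin rfl with hf
  have hfm : ∀ i, f i ∈ J := fun i => J.orderEmbOfFin_mem rfl i
  have himg : Finset.univ.image f = J := by
    apply Finset.coe_injective
    rw [Finset.coe_image, Finset.coe_univ, Set.image_univ]
    exact J.range_orderEmbOfFin rfl
  have had : TsAdmissible S (fun i => E (f i)) := by
    refine ⟨fun i => ⟨f i, (hE.1 _ (hfm i)).1⟩,
      fun i j hij => hE.2 _ (hfm i) _ (hfm j) (f.strictMono hij), f, fun i => hE.1 _ (hfm i), ?_⟩
    rw [himg]; exact hJ
  have := le_aux_succ h0 h1 m x J.card _ had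
  have hs : ∑ j ∈ J, tnormAux θ S m (tsProj (E j) x) =
      ∑ i, tnormAux θ S m (tsProj (E (f i)) x) := by
    conv_lhs => rw [← himg]
    rw [Finset.sum_image (fun a _ b _ h => f.injective h)]
  rw [hs]; exact this

lemma adm_conv {d : ℕ} (E : Fin d → Finset ℕ+) (hE : TsAdmissible S E) :
    ∃ J ∈ S, ∃ E' : ℕ+ → Finset ℕ+, AdmFam J E' ∧
      ∀ g : Finset ℕ+ → ℝ, ∑ i, g (E i) = ∑ j ∈ J, g (E' j) := by
  obtain ⟨hne, hlt, μ, hμ, hS⟩ := hE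
  have hmono : StrictMono μ := fun i j hij => hlt i j hij _ (hμ i).1 _ (hμ j).1
  have hext : ∀ i, Function.extend μ E (fun _ => ∅) (μ i) = E i := fun i =>
    hmono.injective.extend_apply _ _ i
  refine ⟨_, hS, Function.extend μ E (fun _ => ∅), ⟨?_, ?_⟩, ?_⟩
  · intro j hj
    obtain ⟨i, -, rfl⟩ := Finset.mem_image.mp hj
    rw [hext]; exact hμ i
  · intro j hj j' hj' hjj
    obtain ⟨i, -, rfl⟩ := Finset.mem_image.mp hj
    obtain ⟨i', -, rfl⟩ := Finset.mem_image.mp hj'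
    rw [hext, hext]
    exact hlt i i' (hmono.lt_iff_lt.mp hjj)
  · intro g
    rw [Finset.sum_image (fun a _ b _ h => hmono.injective h)]
    exact Finset.sum_congr rfl fun i _ => by rw [hext]

def farVec (B : Finset ℕ+) : ℕ+ →₀ ℝ := ∑ b ∈ B, Finsupp.single b 1

lemma farVec_apply (B : Finset ℕ+) (i : ℕ+) : farVec B i = if i ∈ B then 1 else 0 := by
  simp [farVec, Finsupp.finset_sum_apply, Finsupp.single_apply]

lemma far_ext (h0 : 0 ≤ θ) (h1 : θ ≤ 1) (m : ℕ) (p : ℕ+ →₀ ℝ) (J : Finset ℕ+)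
    (E : ℕ+ → Finset ℕ+) (hE : AdmFam J E) (K : Finset ℕ+) (hK : K ⊆ J) (B : Finset ℕ+)
    (hB : ∀ b ∈ B, (∀ j ∈ J, ∀ a ∈ E j, a < b) ∧ p b = 0) (hKB : K ∪ B ∈ S) :
    θ * (∑ j ∈ K, tnormAux θ S m (tsProj (E j) p) + B.card) ≤ tnorm θ S (farVec B - p) := by
  classical
  set E' : ℕ+ → Finset ℕ+ := fun j => if j ∈ B then {j} else E j with hE'
  have hKnB : ∀ j ∈ K, j ∉ B := fun j hj hjB =>
    lt_irrefl _ ((hB j hjB).1 j (hK hj) j (hE.1 j (hK hj)).1)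
  have e1 : ∀ j ∈ K, E' j = E j := fun j hj => if_neg (hKnB j hj)
  have e2 : ∀ j ∈ B, E' j = {j} := fun j hj => if_pos hj
  have hA : AdmFam (K ∪ B) E' := by
    constructor
    · intro j hj
      rcases Finset.mem_union.mp hj with h | h
      · rw [e1 j h]; exact hE.1 j (hK h)
      · rw [e2 j h]; simp
    · intro j hj j' hj' hjj a ha b hb
      rcases Finset.mem_union.mp hj with h | h <;> rcases Finset.mem_union.mp hj' with h' | h'
      · rw [e1 j h] at ha; rw [e1 j' h'] at hb
        exact hE.2 j (hK h) j' (hK h') hjj a ha b hb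
      · rw [e1 j h] at ha; rw [e2 j' h'] at hb
        rw [Finset.mem_singleton.mp hb]
        exact (hB j' h').1 j (hK h) a ha
      · have := (hB j h).1 j' (hK h') j' (hE.1 j' (hK h')).1
        exact absurd hjj (not_lt.mpr this.le)
      · rw [e2 j h] at ha; rw [e2 j' h'] at hb
        rw [Finset.mem_singleton.mp hb, Finset.mem_singleton.mp ha]; exact hjj
  refine le_trans ?_ (aux_le_tnorm h0 h1 (m+1) _)
  refine le_trans (mul_le_mul_of_nonneg_left ?_ h0) (adm_lb h0 h1 m _ _ hKB E' hA)
  rw [Finset.sum_union (Finset.disjoint_left.mpr hKnB)]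
  refine add_le_add (Finset.sum_le_sum fun j hj => ?_) ?_
  · rw [e1 j hj]
    refine aux_mono h0 h1 m _ _ fun i => ?_
    rw [tsProj_apply, tsProj_apply]
    split_ifs with hi
    · have : i ∉ B := fun h => lt_irrefl _ ((hB i h).1 j (hK hj) i hi)
      simp [farVec_apply, this]
    · simp
  · rw [Finset.card_eq_sum_ones]
    push_cast
    refine Finset.sum_le_sum fun b hb => ?_
    rw [e2 b hb]
    refine le_trans ?_ (coord_le_aux m _ b)
    rw [tsProj_apply]
    simp [farVec_apply, hb, (hB b hb).2]

end lower

lemma far_main (θ : ℝ) (h0 : 0 < θ) (k : ℕ) (hk : 2 ≤ k) (hθk : θ * k = 1) (s : ℕ)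
    (p : ℕ+ →₀ ℝ) (η : ℝ) (hη : 0 < η) (hη' : η ≤ 1/20)
    (hp1 : 1 - η < tnorm θ (Schreier (s+2)) p) (hp2 : tnorm θ (Schreier (s+2)) p ≤ 1 + η)
    (hp3 : ∀ i, |p i| ≤ 1 - η) :
    ∃ N : ℕ, ∀ B : Finset ℕ+, B.card = k → (∀ b ∈ B, N < (b : ℕ)) →
      1 + θ + η < tnorm θ (Schreier (s+2)) (farVec B - p) := by
  classical
  have hk' : (2 : ℝ) ≤ k := by exact_mod_cast hk
  have h1 : θ ≤ 1 := by nlinarith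
  have hthalf : θ ≤ 1 / 2 := by nlinarith
  -- find the family
  obtain ⟨m, J, hJ, E, hE, hsum⟩ : ∃ m, ∃ J ∈ Schreier (s+2), ∃ E : ℕ+ → Finset ℕ+,
      AdmFam J E ∧
      1 - η < θ * ∑ j ∈ J, tnormAux θ (Schreier (s+2)) m (tsProj (E j) p) := by
    by_contra hcon
    push Not at hcon
    refine absurd hp1 (not_lt.mpr (ciSup_le fun m => ?_))
    induction m with
    | zero => exact Real.iSup_le hp3 (by linarith)
    | succ m ih =>
      refine aux_succ_le m p _ ih fun d F hF => ?_
      obtain ⟨J, hJ, E, hE, hg⟩ := adm_conv F hF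
      rw [hg fun A => tnormAux θ (Schreier (s+2)) m (tsProj A p)]
      exact hcon m J hJ E hE
  set w : ℕ+ → ℝ := fun j => tnormAux θ (Schreier (s+2)) m (tsProj (E j) p) with hw
  have hw0 : ∀ j, 0 ≤ w j := fun j => aux_nonneg _ _
  have hw1 : ∀ j, w j ≤ 1 + η := by
    intro j
    refine le_trans ?_ hp2
    refine (aux_mono h0.le h1 m _ p fun i => ?_).trans (aux_le_tnorm h0.le h1 m p)
    rw [tsProj_apply]; split_ifs <;> simp
  have hW : (1 - η) * k < ∑ j ∈ J, w j := by
    have : (1 - η) * k < (θ * ∑ j ∈ J, w j) * k := by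
      apply mul_lt_mul_of_pos_right hsum; linarith
    calc _ < _ := this
      _ = (θ * k) * ∑ j ∈ J, w j := by ring
      _ = _ := by rw [hθk, one_mul]
  have hJne : J.Nonempty := by
    rw [Finset.nonempty_iff_ne_empty]
    rintro rfl
    simp at hW
    nlinarith
  set j := J.min' hJne with hj
  have hjleast : IsLeast (↑J : Set ℕ+) j := J.isLeast_min' hJne
  have hjJ : j ∈ J := J.min'_mem hJne
  -- the threshold
  set T : Finset ℕ+ := J.biUnion E ∪ p.support ∪ J with hT
  refine ⟨T.sup (fun a => (a : ℕ)) + k, fun B hBk hBN => ?_⟩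
  have hTB : ∀ a ∈ T, ∀ b ∈ B, a < b := by
    intro a ha b hb
    have h2 := Finset.le_sup (f := fun a : ℕ+ => (a : ℕ)) ha
    have h3 := hBN b hb
    change (a : ℕ) < b
    omega
  have hJB : ∀ a ∈ J, ∀ b ∈ B, a < b := fun a ha =>
    hTB a (Finset.mem_union_right _ ha)
  have hBc : ∀ a ∈ B, B.card ≤ (a : ℕ) := fun a ha => by have := hBN a ha; omega
  have hBE : ∀ b ∈ B, (∀ j ∈ J, ∀ a ∈ E j, a < b) ∧ p b = 0 := by
    intro b hb
    refine ⟨fun j hj a ha => hTB a ?_ b hb, ?_⟩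
    · exact Finset.mem_union_left _ (Finset.mem_union_left _ (Finset.mem_biUnion.mpr ⟨j, hj, ha⟩))
    · by_contra hne
      have : b ∈ T := Finset.mem_union_left _ (Finset.mem_union_right _ (by simpa using hne))
      exact lt_irrefl _ (hTB b this b hb)
  have LB : ∀ K ⊆ J, K ∪ B ∈ Schreier (s+2) →
      θ * (∑ j ∈ K, w j + k) ≤ tnorm θ (Schreier (s+2)) (farVec B - p) := by
    intro K hK hKB
    have := far_ext h0.le h1 m p J E hE K hK B hBE hKB
    rw [hBk] at this
    exact this
  have LBi := LB (J.erase j) (Finset.erase_subset _ _) (sch_drop_min s J B j hJ hjleast hBc hJB)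
  rw [Finset.sum_erase_eq_sub hjJ] at LBi
  rcases hk.lt_or_eq with hk3 | hk2
  · have hk3' : (3 : ℝ) ≤ k := by exact_mod_cast hk3
    have ht3 : θ ≤ 1 / 3 := by nlinarith
    have := hw1 j
    have h5 : θ * ((1 - η) * k - (1 + η) + k) ≤ θ * (∑ j ∈ J, w j - w j + k) :=
      mul_le_mul_of_nonneg_left (by linarith) h0.le
    have h6 : θ * ((1 - η) * k - (1 + η) + k) = (2 - η) * (θ * k) - θ * (1 + η) := by ring
    rw [hθk] at h6
    nlinarith
  · obtain rfl : k = 2 := hk2.symm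
    have ht : θ = 1 / 2 := by push_cast at hθk; linarith
    by_contra hcon
    push Not at hcon
    have LB' : ∀ K ⊆ J, K ∪ B ∈ Schreier (s+2) → ∑ j ∈ K, w j ≤ 1 + 2 * η := by
      intro K hK hKB
      have := (LB K hK hKB).trans hcon
      rw [ht] at this
      push_cast at this
      linarith
    have hj2 : 2 ≤ (j : ℕ) := by
      by_contra hlt
      have hj1 : j = 1 := by
        have h : (j : ℕ) = 1 := by
          have := j.pos
          omega
        exact PNat.coe_eq_one_iff.mp h
      have hc := sch_has_one (s+1) J hJ (hj1 ▸ hjJ)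
      have h7 : ∑ j ∈ J, w j ≤ J.card • (1 + η) :=
        Finset.sum_le_card_nsmul _ _ _ fun i _ => hw1 i
      rw [nsmul_eq_mul] at h7
      have h8 : (J.card : ℝ) ≤ 1 := by exact_mod_cast hc
      push_cast at hW
      nlinarith
    have B1 := LB' (J.erase j) (Finset.erase_subset _ _)
      (sch_drop_min s J B j hJ hjleast hBc hJB)
    rw [Finset.sum_erase_eq_sub hjJ] at B1
    push_cast at hW
    rcases sch_comb s J j hJ hjleast hj2 with hroom | ⟨L, hLJ, b, hbL, hjL, hroom⟩
    · have := LB' J subset_rfl (hroom B hBk hBc hJB)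
      linarith
    · obtain ⟨r1, r2, r3⟩ := hroom B hBk hBc hJB
      have hjb : j ≠ b := fun h => hjL (h ▸ hbL)
      have B2 := LB' (J \ L) Finset.sdiff_subset r1
      have B3 := LB' {j, b} (by
        intro a ha
        rcases Finset.mem_insert.mp ha with rfl | h
        · exact hjJ
        · rw [Finset.mem_singleton.mp h]; exact hLJ hbL) r2
      have B4 := LB' (insert j (L.erase b)) (by
        intro a ha
        rcases Finset.mem_insert.mp ha with rfl | h
        · exact hjJ
        · exact hLJ (Finset.mem_of_mem_erase h)) r3
      rw [Finset.sum_pair hjb] at B3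
      rw [Finset.sum_insert (fun h => hjL (Finset.mem_of_mem_erase h)),
        Finset.sum_erase_eq_sub hbL] at B4
      have := Finset.sum_sdiff (f := w) hLJ
      linarith

structure CoordSp (θ : ℝ) (X : Type*) [NormedAddCommGroup X] [NormedSpace ℝ X] (e : ℕ+ → X)
    (c : X →ₗ[ℝ] (ℕ+ → ℝ)) : Prop where
  abs_le : ∀ x i, |c x i| ≤ ‖x‖
  inj : Function.Injective c
  ce : ∀ i j, c (e i) j = if i = j then 1 else 0
  norm_e : ∀ i, ‖e i‖ = 1
  add_single : ∀ i (a : ℝ) y, ‖a • e i + y‖ ≤ max |a + c y i| (θ * |a| + ‖y‖)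
  off : ∀ i x, ‖x - c x i • e i‖ ≤ ‖x‖
  far : ∀ p q : X, ‖p‖ = 1 → ‖q‖ = 1 → (∀ i, |c p i| < 1) → (∀ i, |c q i| < 1) →
    ∃ x : X, ‖x‖ = 1 ∧ 1 + θ < ‖x - p‖ ∧ 1 + θ < ‖x - q‖

def ftrunc (F : Finset ℕ+) (a : ℕ+ → ℝ) : ℕ+ →₀ ℝ := ∑ i ∈ F, Finsupp.single i (a i)

lemma ftrunc_apply (F : Finset ℕ+) (a : ℕ+ → ℝ) (i : ℕ+) :
    ftrunc F a i = if i ∈ F then a i else 0 := by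
  simp [ftrunc, Finsupp.finset_sum_apply, Finsupp.single_apply]

lemma coordSp_exists (θ : ℝ) (hθ0 : 0 < θ) (k : ℕ) (hk : 2 ≤ k) (hθk : θ * k = 1) (s : ℕ)
    (X : Type*) [NormedAddCommGroup X] [NormedSpace ℝ X] (e : ℕ+ → X)
    (hX : IsTsirelsonSpace θ (s + 2) X e) : ∃ c : X →ₗ[ℝ] (ℕ+ → ℝ), CoordSp θ X e c := by
  classical
  have hk' : (2 : ℝ) ≤ k := by exact_mod_cast hk
  have h1 : θ ≤ 1 := by nlinarith
  choose a ha hu using hX.expansion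
  simp only at ha hu
  set Φ := Finsupp.linearCombination ℝ e with hΦ
  have hn : ∀ v, ‖Φ v‖ = tnorm θ (Schreier (s+2)) v := fun v => by
    rw [← hX.norm_embed v, hΦ, Finsupp.linearCombination_apply]
  let c : X →ₗ[ℝ] (ℕ+ → ℝ) :=
    { toFun := a
      map_add' := fun x y => by
        refine (hu (x + y) _ ?_).symm
        simpa [add_smul] using (ha x).add (ha y)
      map_smul' := fun r x => by
        refine (hu (r • x) _ ?_).symm
        simpa [mul_smul] using (ha x).const_smul r }
  have hc : ∀ x, HasSum (fun i => c x i • e i) x := ha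
  have hcu : ∀ x b, HasSum (fun i => b i • e i) x → b = c x := hu
  have hcΦ : ∀ v : ℕ+ →₀ ℝ, c (Φ v) = v := by
    intro v
    refine (hcu _ _ ?_).symm
    rw [hΦ, Finsupp.linearCombination_apply, Finsupp.sum]
    refine hasSum_sum_of_ne_finset_zero fun i hi => ?_
    have : v i = 0 := by simpa using hi
    simp [this]
  have hΦs : ∀ i r, Φ (Finsupp.single i r) = r • e i := fun i r => by
    rw [hΦ, Finsupp.linearCombination_single]
  have hΦt : ∀ F b, Φ (ftrunc F b) = ∑ i ∈ F, b i • e i := fun F b => by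
    simp [ftrunc, map_sum, hΦs]
  have hlim : ∀ x, Filter.Tendsto (fun F => Φ (ftrunc F (c x))) Filter.atTop (nhds x) := by
    intro x
    simp_rw [hΦt]
    exact hc x
  have hcoordΦ : ∀ v i, |v i| ≤ ‖Φ v‖ := fun v i => by
    rw [hn]; exact coord_le_tnorm hθ0.le h1 v i
  have habs : ∀ x i, |c x i| ≤ ‖x‖ := by
    intro x i
    refine ge_of_tendsto (hlim x).norm ?_
    filter_upwards [Filter.eventually_ge_atTop {i}] with F hF
    have := hcoordΦ (ftrunc F (c x)) i
    rwa [ftrunc_apply, if_pos (hF (Finset.mem_singleton_self i))] at this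
  have hce : ∀ i j, c (e i) j = if i = j then 1 else 0 := by
    intro i j
    have : e i = Φ (Finsupp.single i 1) := by rw [hΦs, one_smul]
    rw [this, hcΦ, Finsupp.single_apply]
  have htl : θ * (k : ℕ) ≤ 1 := hθk.le
  have hfarn : ∀ B : Finset ℕ+, B.card = k → ‖Φ (farVec B)‖ = 1 := by
    intro B hB
    apply le_antisymm
    · rw [hn]
      refine tnorm_card_le hθ0.le h1 k htl _ ?_ 1 fun i => ?_
      · rw [← hB]
        refine Finset.card_le_card fun i hi => ?_
        by_contra h
        simp [farVec_apply, h] at hi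
      · rw [farVec_apply]; split_ifs <;> simp
    · obtain ⟨b, hb⟩ : B.Nonempty := Finset.card_pos.mp (by omega)
      have := hcoordΦ (farVec B) b
      simpa [farVec_apply, hb] using this
  have hne : ∀ i, ‖e i‖ = 1 := by
    intro i
    apply le_antisymm
    · have : e i = Φ (Finsupp.single i 1) := by rw [hΦs, one_smul]
      rw [this, hn]
      refine tnorm_card_le hθ0.le h1 k htl _ ?_ 1 fun j => ?_
      · refine (Finset.card_le_card Finsupp.support_single_subset).trans ?_
        simp; omega
      · rw [Finsupp.single_apply]; split_ifs <;> simp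
    · have := habs (e i) i
      simpa [hce] using this
  have hfar1 : ∀ p : X, ‖p‖ = 1 → (∀ i, |c p i| < 1) → ∃ N : ℕ, ∀ B : Finset ℕ+, B.card = k →
      (∀ b ∈ B, N < (b : ℕ)) → 1 + θ < ‖Φ (farVec B) - p‖ := by
    intro p hp hlt
    obtain ⟨δ, hδ, hδp⟩ : ∃ δ > 0, ∀ i, |c p i| ≤ 1 - δ := by
      have h2 := (hc p).summable.tendsto_cofinite_zero.norm
      simp only [norm_smul, hne, mul_one, norm_zero, Real.norm_eq_abs] at h2
      have h3 := h2.eventually (gt_mem_nhds (show (0:ℝ) < 1/2 by norm_num))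
      rw [Filter.eventually_cofinite] at h3
      set Z := h3.toFinset with hZ
      have hZm : ∀ i, i ∉ Z → |c p i| < 1/2 := by
        intro i hi
        rw [hZ, Set.Finite.mem_toFinset] at hi
        simpa using hi
      rcases Z.eq_empty_or_nonempty with h | h
      · exact ⟨1/2, by norm_num, fun i => by
          have := hZm i (by rw [h]; simp)
          linarith⟩
      · obtain ⟨i₀, hi₀, hmax⟩ := Z.exists_max_image (fun i => |c p i|) h
        refine ⟨min (1/2) (1 - |c p i₀|), lt_min (by norm_num) (by linarith [hlt i₀]), fun i => ?_⟩
        by_cases hi : i ∈ Z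
        · have := hmax i hi
          have := min_le_right (1/2) (1 - |c p i₀|)
          linarith
        · have := hZm i hi
          have := min_le_left (1/2) (1 - |c p i₀|)
          linarith
    set η := min δ (1/20) with hηd
    have hη : 0 < η := lt_min hδ (by norm_num)
    have hη1 : η ≤ δ := min_le_left _ _
    obtain ⟨F, hF⟩ := ((hlim p).eventually (Metric.ball_mem_nhds p hη)).exists
    rw [dist_eq_norm] at hF
    set v := ftrunc F (c p) with hv
    have t1 := norm_sub_norm_le p (Φ v)
    have t2 := norm_sub_norm_le (Φ v) p
    rw [norm_sub_rev] at t1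
    obtain ⟨N, hN⟩ := far_main θ hθ0 k hk hθk s v η hη (min_le_right _ _)
      (by rw [← hn]; linarith) (by rw [← hn]; linarith) (by
        intro i
        rw [hv, ftrunc_apply]
        split_ifs
        · linarith [hδp i]
        · rw [abs_zero]; linarith [min_le_right δ (1/20)])
    refine ⟨N, fun B hB hb => ?_⟩
    have h5 := hN B hB hb
    rw [← hn, map_sub] at h5
    have h6 : Φ (farVec B) - Φ v = (Φ (farVec B) - p) - (Φ v - p) := by abel
    have h7 := norm_sub_le (Φ (farVec B) - p) (Φ v - p)
    rw [← h6] at h7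
    linarith
  refine ⟨c, habs, ?_, hce, hne, ?_, ?_, ?_⟩
  · intro x y hxy
    have := hc x
    rw [hxy] at this
    exact this.unique (hc y)
  · intro i r y
    have l1 : Filter.Tendsto (fun F => r • e i + Φ (ftrunc F (c y))) Filter.atTop
        (nhds (r • e i + y)) := tendsto_const_nhds.add (hlim y)
    refine le_of_tendsto_of_tendsto l1.norm
      (tendsto_const_nhds.max (tendsto_const_nhds.add (hlim y).norm)) ?_
    filter_upwards [Filter.eventually_ge_atTop {i}] with F hF
    have h := tnorm_add_single (S := Schreier (s+2)) hθ0.le h1 i r (ftrunc F (c y))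
    rw [← hn, ← hn, map_add, hΦs, ftrunc_apply,
      if_pos (hF (Finset.mem_singleton_self i))] at h
    exact h
  · intro i x
    have l1 : Filter.Tendsto (fun F => Φ (ftrunc F (c x)) - c x i • e i) Filter.atTop
        (nhds (x - c x i • e i)) := (hlim x).sub tendsto_const_nhds
    refine le_of_tendsto_of_tendsto l1.norm (hlim x).norm ?_
    filter_upwards [Filter.eventually_ge_atTop {i}] with F hF
    rw [← hΦs, ← map_sub, hn, hn]
    refine tnorm_mono hθ0.le h1 _ _ fun j => ?_
    rw [Finsupp.sub_apply, Finsupp.single_apply, ftrunc_apply]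
    by_cases hij : i = j
    · subst hij
      rw [if_pos (hF (Finset.mem_singleton_self i))]
      simp
    · simp [hij]
  · intro p q hp hq hp1 hq1
    obtain ⟨N, hN⟩ := hfar1 p hp hp1
    obtain ⟨M, hM⟩ := hfar1 q hq hq1
    obtain ⟨B, hB, hBk⟩ : ∃ B : Finset ℕ+, (∀ b ∈ B, N + M < (b : ℕ)) ∧ B.card = k := by
      refine ⟨(Finset.range k).image fun i => Nat.succPNat (N + M + i), ?_, ?_⟩
      · intro b hb
        obtain ⟨i, _, rfl⟩ := Finset.mem_image.mp hb
        rw [Nat.succPNat_coe]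
        omega
      · rw [Finset.card_image_of_injective, Finset.card_range]
        intro i j h
        have := Nat.succPNat_injective h
        omega
    exact ⟨Φ (farVec B), hfarn B hBk, hN B hBk fun b hb => by have := hB b hb; omega,
      hM B hBk fun b hb => by have := hB b hb; omega⟩

section tingley
variable {θ : ℝ} {X : Type*} [NormedAddCommGroup X] [NormedSpace ℝ X] {e : ℕ+ → X}
  {c : X →ₗ[ℝ] (ℕ+ → ℝ)}

local notation "SS" => Metric.sphere (0 : X) 1

lemma ss_norm (x : SS) : ‖(x : X)‖ = 1 := by simpa using x.2

lemma ss_dist (x y : SS) : dist x y = ‖(x : X) - y‖ := by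
  rw [Subtype.dist_eq, dist_eq_norm]

lemma ss_coord (H : CoordSp θ X e c) (x y : SS) (i : ℕ+) :
    |c (x : X) i - c (y : X) i| ≤ dist x y := by
  rw [ss_dist]
  have := H.abs_le ((x : X) - y) i
  rwa [map_sub] at this

lemma ss_dist_le (x y : SS) : dist x y ≤ 2 := by
  rw [ss_dist]
  refine (norm_sub_le _ _).trans ?_
  rw [ss_norm, ss_norm]; norm_num

def ept (H : CoordSp θ X e c) (i : ℕ+) (δ : ℝ) (hδ : |δ| = 1) : SS :=
  ⟨δ • e i, by simp [norm_smul, H.norm_e, hδ]⟩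

lemma ept_coord (H : CoordSp θ X e c) (i : ℕ+) (δ : ℝ) (hδ : |δ| = 1) (j : ℕ+) :
    c (ept H i δ hδ : X) j = if i = j then δ else 0 := by
  simp [ept, H.ce]

lemma ept_dist (H : CoordSp θ X e c) (i : ℕ+) (δ : ℝ) (hδ : |δ| = 1) (x : SS)
    (h : 1 + θ < dist x (ept H i δ hδ)) : 1 + θ < |c (x : X) i - δ| ∧
      dist x (ept H i δ hδ) ≤ |c (x : X) i - δ| := by
  have h1 := H.add_single i (-δ) (x : X)
  rw [abs_neg, hδ, ss_norm, neg_smul, neg_add_eq_sub, neg_add_eq_sub, mul_one] at h1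
  rw [ss_dist] at h ⊢
  change 1 + θ < ‖(x : X) - δ • e i‖ at h
  change _ ∧ ‖(x : X) - δ • e i‖ ≤ _
  rcases le_max_iff.mp h1 with h2 | h2
  · exact ⟨h.trans_le h2, h2⟩
  · linarith

lemma abs_sub_two {u δ : ℝ} (hδ : |δ| = 1) (hu : |u| ≤ 1) (h : 2 ≤ |u - δ|) : u = -δ := by
  have := abs_le.mp hu
  rcases eq_or_eq_neg_of_abs_eq hδ with rfl | rfl
  · rcases le_abs.mp h with h | h <;> linarith
  · rcases le_abs.mp h with h | h <;> linarith

lemma ss_abs_le (H : CoordSp θ X e c) (x : SS) (i : ℕ+) : |c (x : X) i| ≤ 1 := by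
  have := H.abs_le x i
  rwa [ss_norm] at this

lemma ept_dist_two (H : CoordSp θ X e c) (ht : θ ≤ 1/2) (i : ℕ+) (δ : ℝ) (hδ : |δ| = 1) (x : SS)
    (h : 2 ≤ dist x (ept H i δ hδ)) : c (x : X) i = -δ := by
  have := (ept_dist H i δ hδ x (by linarith)).2
  exact abs_sub_two hδ (ss_abs_le H x i) (h.trans this)

lemma dist_two (H : CoordSp θ X e c) (x y : SS) (i : ℕ+) (δ : ℝ) (hδ : |δ| = 1)
    (hx : c (x : X) i = δ) (hy : c (y : X) i = -δ) : 2 ≤ dist x y := by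
  refine le_trans ?_ (ss_coord H x y i)
  rw [hx, hy, sub_neg_eq_add, ← two_mul, abs_mul, hδ]; norm_num

/-- if the image of a unit vector has a coordinate of modulus one -/
lemma face_sub (H : CoordSp θ X e c) (ht : θ ≤ 1/2) (U : SS ≃ᵢ SS) (i : ℕ+) (δ : ℝ) (hδ : |δ| = 1)
    (j : ℕ+) (ε : ℝ) (hε : |ε| = 1) (hp : c (U (ept H i δ hδ) : X) j = ε) (x : SS)
    (hx : c (x : X) i = δ) : c (U x : X) j = ε := by
  have hε' : |-ε| = 1 := by rwa [abs_neg]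
  set y := U.symm (ept H j (-ε) hε') with hy
  have hUy : U y = ept H j (-ε) hε' := by rw [hy, U.apply_symm_apply]
  have h1 : 2 ≤ dist y (ept H i δ hδ) := by
    rw [← U.isometry.dist_eq, hUy, dist_comm]
    refine dist_two H _ _ j ε hε hp ?_
    rw [ept_coord, if_pos rfl]
  have h2 := ept_dist_two H ht i δ hδ y h1
  have h3 := dist_two H x y i δ hδ hx h2
  rw [← U.isometry.dist_eq, hUy] at h3
  have := ept_dist_two H ht j (-ε) hε' (U x) h3
  rwa [neg_neg] at this

lemma exists_coord (H : CoordSp θ X e c) (hθ : 0 < θ) (ht : θ ≤ 1/2) (U : SS ≃ᵢ SS) (i : ℕ+)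
    (δ : ℝ) (hδ : |δ| = 1) : ∃ j, |c (U (ept H i δ hδ) : X) j| = 1 := by
  have hδ' : |-δ| = 1 := by rwa [abs_neg]
  set p := U (ept H i δ hδ) with hp
  set q := U (ept H i (-δ) hδ') with hq
  by_cases hqj : ∃ j, |c (q : X) j| = 1
  · obtain ⟨j, hj⟩ := hqj
    refine ⟨j, ?_⟩
    set p' : SS := ⟨-(p : X), by simp⟩ with hp'
    have h1 : 2 ≤ dist (U.symm p') (ept H i δ hδ) := by
      rw [← U.isometry.dist_eq, U.apply_symm_apply, ← hp, ss_dist]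
      change 2 ≤ ‖-(p : X) - p‖
      rw [← neg_add', norm_neg, ← two_smul ℝ, norm_smul, ss_norm]; norm_num
    have h2 := ept_dist_two H ht i δ hδ _ h1
    have h3 := face_sub H ht U i (-δ) hδ' j _ hj rfl _ h2
    rw [U.apply_symm_apply] at h3
    change c (-(p : X)) j = _ at h3
    rw [map_neg, Pi.neg_apply] at h3
    rw [← abs_neg, h3]; exact hj
  · by_contra hpj
    push Not at hqj hpj
    obtain ⟨x, hx, hxp, hxq⟩ := H.far p q (ss_norm p) (ss_norm q)
      (fun j => lt_of_le_of_ne (ss_abs_le H p j) (hpj j))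
      (fun j => lt_of_le_of_ne (ss_abs_le H q j) (hqj j))
    set x' : SS := ⟨x, by simpa using hx⟩ with hx'
    set y := U.symm x' with hy
    have e1 : dist y (ept H i δ hδ) = ‖x - p‖ := by
      rw [← U.isometry.dist_eq, hy, U.apply_symm_apply, ← hp, ss_dist]
    have e2 : dist y (ept H i (-δ) hδ') = ‖x - q‖ := by
      rw [← U.isometry.dist_eq, hy, U.apply_symm_apply, ← hq, ss_dist]
    have a1 := (ept_dist H i δ hδ y (by rw [e1]; exact hxp)).1
    have a2 := (ept_dist H i (-δ) hδ' y (by rw [e2]; exact hxq)).1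
    have a3 := abs_le.mp (ss_abs_le H y i)
    rcases eq_or_eq_neg_of_abs_eq hδ with rfl | rfl <;>
    rcases lt_abs.mp a1 with h | h <;> rcases lt_abs.mp a2 with h' | h' <;> linarith

lemma face_eq (H : CoordSp θ X e c) (hθ : 0 < θ) (ht : θ ≤ 1/2) (U : SS ≃ᵢ SS) (i : ℕ+) :
    ∃ j, ∃ ε : ℝ, |ε| = 1 ∧ (∀ x : SS, c (x : X) i = 1 → c (U x : X) j = ε) ∧
      (∀ x : SS, c (x : X) i = -1 → c (U x : X) j = -ε) ∧
      (∀ x : SS, c (x : X) j = ε → c (U.symm x : X) i = 1) ∧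
      (∀ x : SS, c (x : X) j = -ε → c (U.symm x : X) i = -1) := by
  have h1 : |(1 : ℝ)| = 1 := abs_one
  obtain ⟨j, hj⟩ := exists_coord H hθ ht U i 1 h1
  obtain ⟨ε, hε⟩ : ∃ ε, ε = c (U (ept H i 1 h1) : X) j := ⟨_, rfl⟩
  rw [← hε] at hj
  have A := face_sub H ht U i 1 h1 j ε hj hε.symm
  obtain ⟨l, hl⟩ := exists_coord H hθ ht U.symm j ε hj
  have B := face_sub H ht U.symm j ε hj l _ hl rfl
  have hlast := B _ hε.symm
  rw [U.symm_apply_apply, ept_coord] at hlast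
  have hil : i = l := by
    by_contra hne
    rw [if_neg hne] at hlast
    rw [← hlast] at hl
    simp at hl
  subst hil
  rw [if_pos rfl] at hlast
  rw [← hlast] at B
  refine ⟨j, ε, hj, A, ?_, B, ?_⟩
  · intro x hx
    have hy := B (ept H j ε hj) (by rw [ept_coord, if_pos rfl])
    have := dist_two H _ x i 1 h1 hy hx
    rw [← U.isometry.dist_eq, U.apply_symm_apply, dist_comm] at this
    exact ept_dist_two H ht j ε hj _ this
  · intro x hx
    have hy := A (ept H i 1 h1) (by rw [ept_coord, if_pos rfl])
    have := dist_two H _ x j ε hj hy hx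
    rw [← U.symm.isometry.dist_eq, U.symm_apply_apply, dist_comm] at this
    exact ept_dist_two H ht i 1 h1 _ this

lemma near_pt (H : CoordSp θ X e c) (hθ : 0 < θ) (ht : θ ≤ 1/2) (x : SS) (i : ℕ+) (δ : ℝ)
    (hδ : |δ| = 1) : ∃ y : SS, c (y : X) i = δ ∧
      dist x y ≤ max |c (x : X) i - δ| 1 := by
  set z : X := (x : X) - c (x : X) i • e i with hz
  have hzn : ‖z‖ ≤ 1 := by have := H.off i x; rwa [ss_norm] at this
  have hzi : c z i = 0 := by simp [hz, H.ce]
  set y : X := δ • e i + (1 - θ) • z with hy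
  have hyi : c y i = δ := by simp [hy, H.ce, hzi]
  have hyn : ‖y‖ = 1 := by
    apply le_antisymm
    · refine (H.add_single i δ _).trans (max_le ?_ ?_)
      · simp [hzi, hδ]
      · rw [hδ, norm_smul, Real.norm_of_nonneg (by linarith)]
        nlinarith
    · have := H.abs_le y i
      rwa [hyi, hδ] at this
  refine ⟨⟨y, by simpa using hyn⟩, hyi, ?_⟩
  rw [ss_dist]
  change ‖(x : X) - y‖ ≤ _
  have hxy : (x : X) - y = (c (x : X) i - δ) • e i + θ • z := by
    rw [hy]
    have : (x : X) = z + c (x : X) i • e i := by rw [hz]; abel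
    rw [sub_smul, sub_smul, one_smul]
    nth_rewrite 1 [this]
    abel
  rw [hxy]
  refine (H.add_single i _ _).trans (max_le ?_ ?_)
  · simp [hzi]
  · rw [norm_smul, Real.norm_of_nonneg hθ.le]
    have h1 := le_max_left |c (x : X) i - δ| 1
    have h2 := le_max_right |c (x : X) i - δ| 1
    have h3 := abs_nonneg (c (x : X) i - δ)
    nlinarith [norm_nonneg z]

lemma one_sided (H : CoordSp θ X e c) (hθ : 0 < θ) (ht : θ ≤ 1/2) (U : SS ≃ᵢ SS) (i j : ℕ+)
    (ε : ℝ) (hε : |ε| = 1) (h1 : ∀ x : SS, c (x : X) i = 1 → c (U x : X) j = ε)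
    (h2 : ∀ x : SS, c (x : X) i = -1 → c (U x : X) j = -ε) (x : SS) :
    (0 ≤ c (x : X) i → 0 ≤ ε * c (U x : X) j ∧ ε * c (U x : X) j ≤ c (x : X) i) ∧
    (c (x : X) i ≤ 0 → c (x : X) i ≤ ε * c (U x : X) j ∧ ε * c (U x : X) j ≤ 0) := by
  obtain ⟨y, hy, hxy⟩ := near_pt H hθ ht x i 1 abs_one
  obtain ⟨y', hy', hxy'⟩ := near_pt H hθ ht x i (-1) (by simp)
  have e1 := ss_coord H (U x) (U y) j
  have e2 := ss_coord H (U x) (U y') j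
  rw [U.isometry.dist_eq, h1 y hy] at e1
  rw [U.isometry.dist_eq, h2 y' hy'] at e2
  have a3 := abs_le.mp (ss_abs_le H x i)
  have f1 := abs_le.mp (e1.trans hxy)
  have f2 := abs_le.mp (e2.trans hxy')
  constructor
  · intro h0
    have g1 : max |c (x : X) i - 1| 1 = 1 := max_eq_right (abs_le.mpr ⟨by linarith, by linarith⟩)
    have g2 : max |c (x : X) i - -1| 1 = c (x : X) i + 1 := by
      rw [sub_neg_eq_add, abs_of_nonneg (by linarith), max_eq_left (by linarith)]
    rw [g1] at f1; rw [g2] at f2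
    rcases eq_or_eq_neg_of_abs_eq hε with rfl | rfl <;> constructor <;> linarith
  · intro h0
    have g1 : max |c (x : X) i - -1| 1 = 1 := max_eq_right (abs_le.mpr ⟨by linarith, by linarith⟩)
    have g2 : max |c (x : X) i - 1| 1 = 1 - c (x : X) i := by
      rw [abs_of_nonpos (by linarith), neg_sub, max_eq_left (by linarith)]
    rw [g1] at f2; rw [g2] at f1
    rcases eq_or_eq_neg_of_abs_eq hε with rfl | rfl <;> constructor <;> linarith

lemma coord_eq (H : CoordSp θ X e c) (hθ : 0 < θ) (ht : θ ≤ 1/2) (U : SS ≃ᵢ SS) (i : ℕ+) :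
    ∃ j, ∃ ε : ℝ, |ε| = 1 ∧ ∀ x : SS, c (x : X) i = ε * c (U x : X) j := by
  obtain ⟨j, ε, hε, h1, h2, h3, h4⟩ := face_eq H hθ ht U i
  refine ⟨j, ε, hε, fun x => ?_⟩
  have A := one_sided H hθ ht U i j ε hε h1 h2 x
  have B := one_sided H hθ ht U.symm j i ε hε
    (by rcases eq_or_eq_neg_of_abs_eq hε with rfl | rfl
        · exact h3
        · simpa using h4)
    (by rcases eq_or_eq_neg_of_abs_eq hε with rfl | rfl
        · exact h4
        · simpa using h3) (U x)
  rw [U.symm_apply_apply] at B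
  obtain ⟨A1, A2⟩ := A
  obtain ⟨B1, B2⟩ := B
  rcases eq_or_eq_neg_of_abs_eq hε with rfl | rfl
  · simp only [one_mul] at *
    rcases le_total 0 (c (x : X) i) with h | h
    · exact le_antisymm (B1 (A1 h).1).2 (A1 h).2
    · exact le_antisymm (A2 h).1 (B2 (A2 h).2).1
  · simp only [neg_mul, one_mul] at *
    rcases le_total 0 (c (x : X) i) with h | h
    · have a := A1 h
      have b := B2 (by linarith)
      linarith
    · have a := A2 h
      have b := B1 (by linarith)
      linarith

lemma tingley_of_coord (H : CoordSp θ X e c) (hθ : 0 < θ) (ht : θ ≤ 1/2) (U : SS ≃ᵢ SS) :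
    ∃ V : X →ₗᵢ[ℝ] X, Function.Surjective V ∧ ∀ x : SS, V (x : X) = (U x : X) := by
  choose σ ε hε h using coord_eq H hθ ht U.symm
  have hU : ∀ x : SS, ∀ j, c (U x : X) j = ε j * c (x : X) (σ j) := by
    intro x j
    have := h j (U x)
    rwa [U.symm_apply_apply] at this
  have hex : ∀ x : X, ∃ y : X, ‖y‖ = ‖x‖ ∧ ∀ j, c y j = ε j * c x (σ j) := by
    intro x
    by_cases hx : x = 0
    · exact ⟨0, by simp [hx], by simp [hx]⟩
    · have hxn : ‖x‖ ≠ 0 := norm_ne_zero_iff.mpr hx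
      set u : SS := ⟨‖x‖⁻¹ • x, by simp [norm_smul, hxn]⟩ with hu
      refine ⟨‖x‖ • (U u : X), ?_, fun j => ?_⟩
      · rw [norm_smul, ss_norm, norm_norm, mul_one]
      · rw [map_smul, Pi.smul_apply, hU]
        change ‖x‖ * (ε j * c (‖x‖⁻¹ • x) (σ j)) = _
        rw [map_smul, Pi.smul_apply, smul_eq_mul]
        field_simp
  choose V hVn hVc using hex
  let VL : X →ₗ[ℝ] X :=
    { toFun := V
      map_add' := fun x y => H.inj (by
        ext j
        simp only [map_add, Pi.add_apply, hVc]
        ring)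
      map_smul' := fun r x => H.inj (by
        ext j
        simp only [map_smul, Pi.smul_apply, hVc, smul_eq_mul, RingHom.id_apply]
        ring) }
  have hVU : ∀ x : SS, VL (x : X) = (U x : X) := fun x => H.inj (by
    ext j
    rw [hU]
    exact hVc _ _)
  refine ⟨⟨VL, hVn⟩, ?_, hVU⟩
  intro y
  by_cases hy : y = 0
  · exact ⟨0, by simp [hy]⟩
  · have hyn : ‖y‖ ≠ 0 := norm_ne_zero_iff.mpr hy
    set u : SS := ⟨‖y‖⁻¹ • y, by simp [norm_smul, hyn]⟩ with hu
    refine ⟨‖y‖ • (U.symm u : X), ?_⟩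
    change VL (‖y‖ • (U.symm u : X)) = y
    rw [map_smul, hVU, U.apply_symm_apply, hu]
    simp only [smul_smul]
    rw [mul_inv_cancel₀ hyn, one_smul]

end tingley

/-- Tingley's problem for `T[θ, S_n]`, integer `θ⁻¹ ≥ 2`, `n ≥ 2`.
Every surjective isometry of the unit sphere of `T[θ, S_n]` extends to a surjective
linear isometry of the whole space. -/
theorem tsirelson_tingley_Sn
    (θ : ℝ) (hθ0 : 0 < θ) (k : ℕ) (hk : 2 ≤ k) (hθk : θ⁻¹ = (k : ℝ))
    (n : ℕ) (hn : 2 ≤ n)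
    (X : Type*) [NormedAddCommGroup X] [NormedSpace ℝ X] (e : ℕ+ → X)
    (hX : IsTsirelsonSpace θ n X e)
    (U : Metric.sphere (0 : X) 1 → Metric.sphere (0 : X) 1)
    (hU : Isometry U) (hUsurj : Function.Surjective U) :
    ∃ V : X →ₗᵢ[ℝ] X, Function.Surjective V ∧
      ∀ x : Metric.sphere (0 : X) 1, V (x : X) = (U x : X) := by
  obtain ⟨s, rfl⟩ : ∃ s, n = s + 2 := ⟨n - 2, by omega⟩
  have hk' : (2 : ℝ) ≤ k := by exact_mod_cast hk
  have hθk' : θ * k = 1 := by rw [← hθk]; exact mul_inv_cancel₀ hθ0.ne'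
  have ht : θ ≤ 1 / 2 := by nlinarith
  obtain ⟨c, H⟩ := coordSp_exists θ hθ0 k hk hθk' s X e hX
  let W : Metric.sphere (0 : X) 1 ≃ᵢ Metric.sphere (0 : X) 1 :=
    ⟨Equiv.ofBijective U ⟨hU.injective, hUsurj⟩, hU⟩
  exact tingley_of_coord H hθ0 ht W
end
end

section
/- Let θ ∈ (0, 1/2] and let v ∈ S_{T[θ,S₁]} with basis expansion v = Σ_i v_i e_i be such that v_i = 0 for all i ≤ ⌊θ⁻¹⌋, and suppose min( ‖v + y‖ , ‖v − y‖ ) ≤ θ · (⌊θ⁻¹⌋ + 1) for all y ∈ S_{T[θ,S₁]}. Then v has one of the following two forms: (a) |v_{⌊θ⁻¹⌋+1}| = 1 and |v_i| ≤ θ for all i ≠ ⌊θ⁻¹⌋ + 1; or (b) v = ε e_m + a e_{⌊θ⁻¹⌋+1} for some integer m ≥ ⌊θ⁻¹⌋ + 2, some ε ∈ {−1, 1}, and some real a with |a| ≤ θ. -/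
open scoped BigOperators

noncomputable section

def Wk {d : ℕ} (E : Fin d → Finset ℕ+) : Prop :=
  (∀ i j : Fin d, i < j → ∀ a ∈ E i, ∀ b ∈ E j, a < b) ∧ ∀ i, ∀ a ∈ E i, d ≤ (a : ℕ)

lemma Wk.mono {d : ℕ} {E E' : Fin d → Finset ℕ+} (h : Wk E) (hs : ∀ i, E' i ⊆ E i) : Wk E' :=
  ⟨fun i j hij a ha b hb => h.1 i j hij a (hs i ha) b (hs j hb), fun i a ha => h.2 i a (hs i ha)⟩

lemma Wk.of_adm {d : ℕ} {E : Fin d → Finset ℕ+} (h : TsAdmissible (Schreier 1) E) : Wk E := by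
  obtain ⟨h1, h2, μ, h3, h4⟩ := h
  refine ⟨h2, fun i a ha => ?_⟩
  have hinj : Function.Injective μ := by
    intro i j hij
    rcases lt_trichotomy i j with hl | hl | hl
    · have := h2 i j hl _ (h3 i).1 _ (h3 j).1
      rw [hij] at this; exact absurd this (lt_irrefl _)
    · exact hl
    · have := h2 j i hl _ (h3 j).1 _ (h3 i).1
      rw [hij] at this; exact absurd this (lt_irrefl _)
  have h5 := h4 (μ i) (Finset.mem_image_of_mem _ (Finset.mem_univ i))
  rw [Finset.card_image_of_injective _ hinj, Finset.card_univ, Fintype.card_fin] at h5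
  have : μ i ≤ a := (h3 i).2 ha
  exact h5.trans (by exact_mod_cast this)

def l1 (x : ℕ+ →₀ ℝ) : ℝ := ∑ i ∈ x.support, |x i|

lemma l1_nonneg (x : ℕ+ →₀ ℝ) : 0 ≤ l1 x := Finset.sum_nonneg fun _ _ => abs_nonneg _

lemma l1_eq {x : ℕ+ →₀ ℝ} {s : Finset ℕ+} (h : x.support ⊆ s) : l1 x = ∑ i ∈ s, |x i| :=
  Finset.sum_subset h fun i _ hi => by simp [Finsupp.notMem_support_iff.1 hi]

lemma abs_le_l1 (x : ℕ+ →₀ ℝ) (i : ℕ+) : |x i| ≤ l1 x := by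
  by_cases h : i ∈ x.support
  · exact Finset.single_le_sum (f := fun i => |x i|) (fun _ _ => abs_nonneg _) h
  · simp [Finsupp.notMem_support_iff.1 h, l1_nonneg]

lemma sum_l1_proj {d : ℕ} {E : Fin d → Finset ℕ+} (h : Wk E) (x : ℕ+ →₀ ℝ) :
    ∑ i, l1 (tsProj (E i) x) ≤ l1 x := by
  classical
  have h1 : ∀ i, l1 (tsProj (E i) x) = ∑ k ∈ x.support, if k ∈ E i then |x k| else 0 := by
    intro i
    rw [l1_eq (s := x.support)]
    · refine Finset.sum_congr rfl fun k _ => ?_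
      rw [tsProj_apply]; split_ifs <;> simp
    · intro k hk
      rw [Finsupp.mem_support_iff, tsProj_apply] at hk
      rw [Finsupp.mem_support_iff]
      intro h0; simp [h0] at hk
  simp_rw [h1]
  rw [Finset.sum_comm]
  refine Finset.sum_le_sum fun k _ => ?_
  by_cases hk : ∃ i, k ∈ E i
  · obtain ⟨i, hi⟩ := hk
    rw [Finset.sum_eq_single i]
    · simp [hi]
    · intro j _ hj
      rw [if_neg]
      intro hkj
      rcases lt_or_gt_of_ne hj with hl | hl
      · exact lt_irrefl _ (h.1 _ _ hl _ hkj _ hi)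
      · exact lt_irrefl _ (h.1 _ _ hl _ hi _ hkj)
    · simp
  · push Not at hk
    rw [Finset.sum_eq_zero]
    · exact abs_nonneg _
    · intro i _; simp [hk i]

abbrev S1 : Set (Finset ℕ+) := Schreier 1

lemma adm_empty : TsAdmissible S1 (fun _ : Fin 0 => (∅ : Finset ℕ+)) :=
  ⟨fun i => i.elim0, fun i => i.elim0, fun i => i.elim0, fun i => i.elim0, by
    simp [S1, Schreier]⟩

lemma aux_bdd (x : ℕ+ →₀ ℝ) : BddAbove (Set.range fun i => |x i|) :=
  ⟨l1 x, by rintro _ ⟨i, rfl⟩; exact abs_le_l1 x i⟩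

lemma aux_nonneg_le {θ : ℝ} (h0 : 0 < θ) (h1 : θ ≤ 1) (m : ℕ) : ∀ x : ℕ+ →₀ ℝ,
    0 ≤ tnormAux θ S1 m x ∧ tnormAux θ S1 m x ≤ l1 x := by
  induction m with
  | zero =>
    intro x
    simp only [tnormAux]
    exact ⟨Real.iSup_nonneg fun i => abs_nonneg _, ciSup_le fun i => abs_le_l1 x i⟩
  | succ m ih =>
    intro x
    simp only [tnormAux]
    refine ⟨le_max_of_le_left (ih x).1, max_le (ih x).2 ?_⟩
    refine csSup_le ⟨_, 0, _, adm_empty, rfl⟩ ?_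
    rintro r ⟨d, E, hE, rfl⟩
    have : ∑ i, tnormAux θ S1 m (tsProj (E i) x) ≤ l1 x :=
      (Finset.sum_le_sum fun i _ => (ih _).2).trans (sum_l1_proj (Wk.of_adm hE) x)
    calc _ ≤ θ * l1 x := by gcongr
      _ ≤ 1 * l1 x := by gcongr; exact l1_nonneg x
      _ = l1 x := one_mul _

lemma aux_set_bdd {θ : ℝ} (h0 : 0 < θ) (h1 : θ ≤ 1) (m : ℕ) (x : ℕ+ →₀ ℝ) :
    BddAbove {r : ℝ | ∃ (d : ℕ) (E : Fin d → Finset ℕ+), TsAdmissible S1 E ∧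
          r = θ * ∑ i, tnormAux θ S1 m (tsProj (E i) x)} := by
  refine ⟨θ * l1 x, ?_⟩
  rintro r ⟨d, E, hE, rfl⟩
  have : ∑ i, tnormAux θ S1 m (tsProj (E i) x) ≤ l1 x :=
    (Finset.sum_le_sum fun i _ => (aux_nonneg_le h0 h1 m _).2).trans
      (sum_l1_proj (Wk.of_adm hE) x)
  gcongr

lemma aux_mono_s8 {θ : ℝ} (x : ℕ+ →₀ ℝ) : Monotone fun m => tnormAux θ S1 m x :=
  monotone_nat_of_le_succ fun m => by simp only [tnormAux]; exact le_max_left _ _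

lemma aux_range_bdd {θ : ℝ} (h0 : 0 < θ) (h1 : θ ≤ 1) (x : ℕ+ →₀ ℝ) :
    BddAbove (Set.range fun m => tnormAux θ S1 m x) :=
  ⟨l1 x, by rintro _ ⟨m, rfl⟩; exact (aux_nonneg_le h0 h1 m x).2⟩

lemma aux_tendsto {θ : ℝ} (h0 : 0 < θ) (h1 : θ ≤ 1) (x : ℕ+ →₀ ℝ) :
    Filter.Tendsto (fun m => tnormAux θ S1 m x) Filter.atTop (nhds (tnorm θ S1 x)) :=
  tendsto_atTop_ciSup (aux_mono_s8 x) (aux_range_bdd h0 h1 x)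

lemma aux_le {θ : ℝ} (h0 : 0 < θ) (h1 : θ ≤ 1) (m : ℕ) (x : ℕ+ →₀ ℝ) :
    tnormAux θ S1 m x ≤ tnorm θ S1 x :=
  le_ciSup (aux_range_bdd h0 h1 x) m

lemma coord_le {θ : ℝ} (h0 : 0 < θ) (h1 : θ ≤ 1) (x : ℕ+ →₀ ℝ) (i : ℕ+) :
    |x i| ≤ tnorm θ S1 x := by
  refine le_trans ?_ (aux_le h0 h1 0 x)
  simp only [tnormAux]
  exact le_ciSup (aux_bdd x) i

lemma tnorm_nonneg {θ : ℝ} (h0 : 0 < θ) (h1 : θ ≤ 1) (x : ℕ+ →₀ ℝ) :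
    0 ≤ tnorm θ S1 x := (abs_nonneg _).trans (coord_le h0 h1 x 1)

lemma adm_le {θ : ℝ} (h0 : 0 < θ) (h1 : θ ≤ 1) (x : ℕ+ →₀ ℝ) {d : ℕ} {E : Fin d → Finset ℕ+}
    (hE : TsAdmissible S1 E) : θ * ∑ i, tnorm θ S1 (tsProj (E i) x) ≤ tnorm θ S1 x := by
  have h2 : Filter.Tendsto (fun m => θ * ∑ i, tnormAux θ S1 m (tsProj (E i) x)) Filter.atTop
      (nhds (θ * ∑ i, tnorm θ S1 (tsProj (E i) x))) :=
    (tendsto_finsetSum _ fun i _ => aux_tendsto h0 h1 _).const_mul _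
  refine le_of_tendsto' h2 fun m => ?_
  refine le_trans ?_ (aux_le h0 h1 (m+1) x)
  simp only [tnormAux]
  exact le_max_of_le_right (le_csSup (aux_set_bdd h0 h1 m x) ⟨d, E, hE, rfl⟩)

lemma tsProj_empty (x : ℕ+ →₀ ℝ) : tsProj ∅ x = 0 := by
  ext i; simp [tsProj_apply]

lemma tnorm_le_l1 {θ : ℝ} (h0 : 0 < θ) (h1 : θ ≤ 1) (x : ℕ+ →₀ ℝ) : tnorm θ S1 x ≤ l1 x :=
  ciSup_le fun m => (aux_nonneg_le h0 h1 m x).2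

lemma tnorm_zero {θ : ℝ} (h0 : 0 < θ) (h1 : θ ≤ 1) : tnorm θ S1 0 = 0 :=
  le_antisymm ((tnorm_le_l1 h0 h1 0).trans (by simp [l1])) (tnorm_nonneg h0 h1 0)

lemma wk_le {θ : ℝ} (h0 : 0 < θ) (h1 : θ ≤ 1) (x : ℕ+ →₀ ℝ) {d : ℕ} {E : Fin d → Finset ℕ+}
    (hE : Wk E) : θ * ∑ i, tnorm θ S1 (tsProj (E i) x) ≤ tnorm θ S1 x := by
  classical
  set I : Finset (Fin d) := Finset.univ.filter fun i => (E i).Nonempty with hI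
  set f := I.orderEmbOfFin rfl with hf
  have hne : ∀ k, (E (f k)).Nonempty := fun k => by
    have := I.orderEmbOfFin_mem rfl k
    exact (Finset.mem_filter.1 this).2
  have hadm : TsAdmissible S1 (fun k => E (f k)) := by
    refine ⟨hne, fun i j hij => hE.1 _ _ (f.strictMono hij), fun k => (E (f k)).min' (hne k),
      fun k => (E (f k)).isLeast_min' (hne k), ?_⟩
    simp only [S1, Schreier, Set.mem_ofPred_eq]
    intro a ha
    obtain ⟨k, -, rfl⟩ := Finset.mem_image.1 ha
    refine Finset.card_image_le.trans ?_
    rw [Finset.card_univ, Fintype.card_fin]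
    refine le_trans ?_ (hE.2 (f k) _ (Finset.min'_mem _ _))
    exact (Finset.card_le_univ I).trans (by simp)
  have := adm_le h0 h1 x hadm
  refine le_trans (le_of_eq ?_) this
  congr 1
  have e1 : ∑ i, tnorm θ S1 (tsProj (E i) x) = ∑ i ∈ I, tnorm θ S1 (tsProj (E i) x) := by
    symm
    apply Finset.sum_subset (Finset.subset_univ _)
    intro i _ hi
    have : E i = ∅ := by
      by_contra hc
      exact hi (Finset.mem_filter.2 ⟨Finset.mem_univ _, Finset.nonempty_iff_ne_empty.2 hc⟩)
    rw [this, tsProj_empty, tnorm_zero h0 h1]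
  rw [e1]
  have e2 : I = Finset.univ.map f.toEmbedding := by
    simp [hf]
  conv_lhs => rw [e2]
  rw [Finset.sum_map]
  rfl

lemma tnorm_le {θ : ℝ} (h0 : 0 < θ) (h1 : θ ≤ 1) (x : ℕ+ →₀ ℝ) (c : ℝ) (hc : ∀ i, |x i| ≤ c)
    (hE : ∀ (d : ℕ) (E : Fin d → Finset ℕ+), Wk E → θ * ∑ i, tnorm θ S1 (tsProj (E i) x) ≤ c) :
    tnorm θ S1 x ≤ c := by
  refine ciSup_le fun m => ?_
  induction m with
  | zero => simp only [tnormAux]; exact ciSup_le hc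
  | succ m ih =>
    simp only [tnormAux]
    refine max_le ih (csSup_le ⟨_, 0, _, adm_empty, rfl⟩ ?_)
    rintro r ⟨d, E, hE', rfl⟩
    refine le_trans ?_ (hE d E (Wk.of_adm hE'))
    gcongr
    exact aux_le h0 h1 m _

lemma tnorm_dom {θ : ℝ} (h0 : 0 < θ) (h1 : θ ≤ 1) (x y : ℕ+ →₀ ℝ) (h : ∀ i, |x i| ≤ |y i|) :
    tnorm θ S1 x ≤ tnorm θ S1 y := by
  refine ciSup_le fun m => le_trans ?_ (aux_le h0 h1 m y)
  induction m generalizing x y with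
  | zero =>
    simp only [tnormAux]
    exact ciSup_mono (aux_bdd y) h
  | succ m ih =>
    simp only [tnormAux]
    refine max_le_max (ih x y h) (csSup_le ⟨_, 0, _, adm_empty, rfl⟩ ?_)
    rintro r ⟨d, E, hE', rfl⟩
    refine le_csSup_of_le (aux_set_bdd h0 h1 m y) ⟨d, E, hE', rfl⟩ ?_
    gcongr with i
    apply ih
    intro k
    simp only [tsProj_apply]
    split_ifs
    · exact h k
    · simp

lemma tnorm_le_of_l1 {θ : ℝ} (h0 : 0 < θ) (h1 : θ ≤ 1) (x : ℕ+ →₀ ℝ) (c : ℝ)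
    (hc : ∀ i, |x i| ≤ c) (hl : θ * l1 x ≤ c) : tnorm θ S1 x ≤ c := by
  refine tnorm_le h0 h1 x c hc fun d E hE => le_trans ?_ hl
  gcongr
  exact (Finset.sum_le_sum fun i _ => tnorm_le_l1 h0 h1 _).trans (sum_l1_proj hE x)

/-- restriction of a sequence -/
def rs (a : ℕ+ → ℝ) (F : Finset ℕ+) : ℕ+ →₀ ℝ :=
  Finsupp.onFinset F (fun i => if i ∈ F then a i else 0) (by intro i; simp; tauto)

lemma rs_apply (a : ℕ+ → ℝ) (F : Finset ℕ+) (i : ℕ+) :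
    rs a F i = if i ∈ F then a i else 0 := rfl

lemma tsProj_rs (a : ℕ+ → ℝ) (F E : Finset ℕ+) : tsProj E (rs a F) = rs a (E ∩ F) := by
  ext i
  simp only [tsProj_apply, rs_apply, Finset.mem_inter]
  split_ifs <;> tauto

def q (θ : ℝ) (a : ℕ+ → ℝ) (F : Finset ℕ+) : ℝ := tnorm θ S1 (rs a F)

lemma q_mono {θ : ℝ} (h0 : 0 < θ) (h1 : θ ≤ 1) (a : ℕ+ → ℝ) {F G : Finset ℕ+} (h : F ⊆ G) :
    q θ a F ≤ q θ a G := by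
  refine tnorm_dom h0 h1 _ _ fun i => ?_
  simp only [rs_apply]
  split_ifs with h2 h3 h3
  · rfl
  · exact absurd (h h2) h3
  · simp
  · rfl

lemma q_nonneg {θ : ℝ} (h0 : 0 < θ) (h1 : θ ≤ 1) (a : ℕ+ → ℝ) (F : Finset ℕ+) : 0 ≤ q θ a F :=
  tnorm_nonneg h0 h1 _

lemma q_empty {θ : ℝ} (h0 : 0 < θ) (h1 : θ ≤ 1) (a : ℕ+ → ℝ) : q θ a ∅ = 0 := by
  have : rs a ∅ = 0 := by ext i; simp [rs_apply]
  rw [q, this, tnorm_zero h0 h1]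

lemma q_coord {θ : ℝ} (h0 : 0 < θ) (h1 : θ ≤ 1) (a : ℕ+ → ℝ) {F : Finset ℕ+} {i : ℕ+}
    (h : i ∈ F) : |a i| ≤ q θ a F := by
  have := coord_le h0 h1 (rs a F) i
  rwa [rs_apply, if_pos h] at this

lemma q_wk {θ : ℝ} (h0 : 0 < θ) (h1 : θ ≤ 1) (a : ℕ+ → ℝ) {F : Finset ℕ+}
    {d : ℕ} {E : Fin d → Finset ℕ+} (hE : Wk E) (hF : ∀ i, E i ⊆ F) :
    θ * ∑ i, q θ a (E i) ≤ q θ a F := by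
  have := wk_le h0 h1 (rs a F) hE
  simp only [tsProj_rs] at this
  simp only [Finset.inter_eq_left.2 (hF _)] at this
  exact this

lemma q_attain {θ : ℝ} (h0 : 0 < θ) (h1 : θ ≤ 1) (a : ℕ+ → ℝ) {F : Finset ℕ+} {c : ℝ}
    (hc0 : 0 ≤ c) (hc : c < q θ a F) : (∃ i ∈ F, c < |a i|) ∨
    ∃ (d : ℕ) (E : Fin d → Finset ℕ+), Wk E ∧ (∀ i, E i ⊆ F) ∧ c < θ * ∑ i, q θ a (E i) := by
  by_contra hcon
  push Not at hcon
  obtain ⟨h2, h3⟩ := hcon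
  refine absurd hc (not_lt.2 (tnorm_le h0 h1 _ c ?_ ?_))
  · intro i
    rw [rs_apply]; split_ifs with h
    · exact h2 i h
    · simpa using hc0
  · intro d E hE
    simp only [tsProj_rs]
    exact h3 d (fun i => E i ∩ F) (hE.mono fun i => Finset.inter_subset_left)
      fun i => Finset.inter_subset_right

/-- the two-set property -/
def TwoSet (θ : ℝ) (a : ℕ+ → ℝ) (N : ℕ+) : Prop :=
  ∀ A B : Finset ℕ+, (∀ x ∈ A, N < x) → (∀ x ∈ B, N < x) → (∀ x ∈ A, ∀ y ∈ B, x < y) →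
    q θ a A + q θ a B ≤ 1

/-- split off the piece containing the minimum -/
lemma split_piece {θ : ℝ} (h0 : 0 < θ) (h1 : θ ≤ 1) (a : ℕ+ → ℝ) {s : ℕ+}
    {d : ℕ} {E : Fin d → Finset ℕ+} (hE : Wk E) (hs : ∀ i, ∀ x ∈ E i, s ≤ x)
    {j : Fin d} (hj : s ∈ E j) :
    (∀ i, i < j → E i = ∅) ∧ ∃ D : Finset ℕ+, (∀ i, i ≠ j → E i ⊆ D) ∧
      (∀ x ∈ D, ∃ i, i ≠ j ∧ x ∈ E i) ∧
      (∀ x ∈ E j, ∀ y ∈ D, x < y) ∧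
      θ * ∑ i ∈ Finset.univ.erase j, q θ a (E i) ≤ q θ a D := by
  classical
  have hemp : ∀ i, i < j → E i = ∅ := by
    intro i hij
    rw [Finset.eq_empty_iff_forall_notMem]
    intro x hx
    exact absurd (hE.1 i j hij x hx s hj) (not_lt.2 (hs i x hx))
  refine ⟨hemp, (Finset.univ.erase j).biUnion E, ?_, ?_, ?_, ?_⟩
  · intro i hi
    exact Finset.subset_biUnion_of_mem E (Finset.mem_erase.2 ⟨hi, Finset.mem_univ _⟩)
  · intro x hx
    obtain ⟨i, hi, hx⟩ := Finset.mem_biUnion.1 hx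
    exact ⟨i, (Finset.mem_erase.1 hi).1, hx⟩
  · intro x hx y hy
    obtain ⟨i, hi, hy⟩ := Finset.mem_biUnion.1 hy
    rcases lt_or_gt_of_ne (Finset.mem_erase.1 hi).1 with hl | hl
    · rw [hemp i hl] at hy; simp at hy
    · exact hE.1 j i hl x hx y hy
  · have hW : Wk (fun i => if i = j then ∅ else E i) := hE.mono fun i => by
      split_ifs <;> simp
    have := q_wk h0 h1 a (F := (Finset.univ.erase j).biUnion E) hW (fun i => by
      split_ifs with h
      · simp
      · exact Finset.subset_biUnion_of_mem E (Finset.mem_erase.2 ⟨h, Finset.mem_univ _⟩))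
    refine le_trans (le_of_eq ?_) this
    congr 1
    rw [← Finset.add_sum_erase _ _ (Finset.mem_univ j)]
    simp only [if_true, q_empty h0 h1, zero_add]
    refine Finset.sum_congr rfl fun i hi => ?_
    rw [if_neg (Finset.mem_erase.1 hi).1]

lemma lemU {θ : ℝ} (h0 : 0 < θ) (h1 : θ ≤ 1 / 2) (a : ℕ+ → ℝ) (N : ℕ+) (hTS : TwoSet θ a N)
    (hsup : ∀ ε > 0, ∃ B : Finset ℕ+, (∀ x ∈ B, N < x) ∧ 1 - ε < q θ a B) :
    ∃ m : ℕ+, N < m ∧ |a m| = 1 ∧ ∀ i, N < i → i ≠ m → a i = 0 := by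
  classical
  have h1' : θ ≤ 1 := by linarith
  have hex : ∃ s : ℕ+, N < s ∧ a s ≠ 0 := by
    by_contra hcon
    push Not at hcon
    obtain ⟨B, hB, hq⟩ := hsup (1/2) (by norm_num)
    have : rs a B = rs a ∅ := by
      ext i; simp only [rs_apply]
      split_ifs with h2 h3
      · simp at h3
      · exact hcon i (hB i h2)
      · simp at *
      · rfl
    rw [q, this] at hq
    have := q_empty h0 h1' a
    rw [q] at this
    linarith
  obtain ⟨s, ⟨hNs, has⟩, hmin⟩ := WellFounded.has_min (wellFounded_lt (α := ℕ+))
    {s : ℕ+ | N < s ∧ a s ≠ 0} hex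
  have hz : ∀ i, N < i → i < s → a i = 0 := by
    intro i hi his
    by_contra hc
    exact hmin i ⟨hi, hc⟩ his
  set δ := |a s| with hδ
  have hδ0 : 0 < δ := abs_pos.2 has
  have hT1 : ∀ B : Finset ℕ+, (∀ x ∈ B, s < x) → δ + q θ a B ≤ 1 := by
    intro B hB
    have := hTS {s} B (by simpa using hNs) (fun x hx => hNs.trans (hB x hx)) (by simpa using hB)
    have h2 : δ ≤ q θ a {s} := q_coord h0 h1' a (by simp)
    linarith
  have hδ1 : δ ≤ 1 := by
    have := hT1 ∅ (by simp)
    linarith [q_nonneg h0 h1' a ∅]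
  rcases hδ1.lt_or_eq with hlt | heq
  · exfalso
    obtain ⟨ε, hε0, hε1, hε2⟩ : ∃ ε > 0, ε < δ / 2 ∧ ε < 1 - δ := by
      refine ⟨min (δ/2) (1-δ) / 2, ?_, ?_, ?_⟩
      · have : 0 < min (δ/2) (1-δ) := lt_min (by linarith) (by linarith)
        linarith
      · have : 0 < min (δ/2) (1-δ) := lt_min (by linarith) (by linarith)
        linarith [min_le_left (δ/2) (1-δ)]
      · have : 0 < min (δ/2) (1-δ) := lt_min (by linarith) (by linarith)
        linarith [min_le_right (δ/2) (1-δ)]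
    obtain ⟨B₀, hB₀, hq₀⟩ := hsup ε hε0
    set B := B₀.filter fun x => s ≤ x with hBdef
    have hBs : ∀ x ∈ B, s ≤ x := fun x hx => (Finset.mem_filter.1 hx).2
    have hq : 1 - ε < q θ a B := by
      have : rs a B = rs a B₀ := by
        ext i; simp only [rs_apply, hBdef, Finset.mem_filter]
        by_cases h2 : i ∈ B₀
        · by_cases h3 : s ≤ i
          · simp [h2, h3]
          · simp [h2, h3, hz i (hB₀ i h2) (not_le.1 h3)]
        · simp [h2]
      rw [q, this]; exact hq₀
    rcases q_attain h0 h1' a (by linarith) hq with ⟨i, hi, hc⟩ | ⟨d, E, hE, hEB, hc⟩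
    · rcases (hBs i hi).eq_or_lt with rfl | hl
      · linarith
      · have := hT1 {i} (by simpa using hl)
        have h2 : |a i| ≤ q θ a {i} := q_coord h0 h1' a (by simp)
        linarith
    · have hs : ∀ i, ∀ x ∈ E i, s ≤ x := fun i x hx => hBs x (hEB i hx)
      by_cases hj : ∃ j, s ∈ E j
      · obtain ⟨j, hj⟩ := hj
        obtain ⟨-, D, hD1, hD2, hD3, hD4⟩ := split_piece h0 h1' a hE hs hj
        have h3 := hTS (E j) D (fun x hx => hNs.trans_le (hs j x hx))
          (fun x hx => hNs.trans (hD3 s hj x hx)) hD3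
        rw [← Finset.add_sum_erase _ _ (Finset.mem_univ j), mul_add] at hc
        have h4 : δ ≤ q θ a (E j) := q_coord h0 h1' a hj
        nlinarith
      · push Not at hj
        have h3 := q_wk h0 h1' a (F := Finset.univ.biUnion E) hE
          (fun i => Finset.subset_biUnion_of_mem E (Finset.mem_univ i))
        have h4 := hT1 (Finset.univ.biUnion E) (by
          intro x hx
          obtain ⟨i, -, hx⟩ := Finset.mem_biUnion.1 hx
          refine lt_of_le_of_ne (hs i x hx) ?_
          rintro rfl
          exact hj i hx)
        linarith
  · refine ⟨s, hNs, heq, fun i hi his => ?_⟩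
    rcases lt_or_gt_of_ne his with hl | hl
    · exact hz i hi hl
    · have := hT1 {i} (by simpa using hl)
      have h2 : |a i| ≤ q θ a {i} := q_coord h0 h1' a (by simp)
      exact abs_eq_zero.1 (le_antisymm (by linarith) (abs_nonneg _))

lemma pair_sum {ι : Type*} [DecidableEq ι] (s : Finset ι) (p : ι → ℝ) (K : ℕ) (hK : 2 ≤ K)
    (hs : s.card ≤ K) (h1 : ∀ i ∈ s, p i ≤ 1)
    (h2 : ∀ i ∈ s, ∀ j ∈ s, i ≠ j → p i + p j ≤ 1) : ∑ i ∈ s, p i ≤ (K : ℝ) / 2 := by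
  have hK' : (2 : ℝ) ≤ K := by exact_mod_cast hK
  have hs' : (s.card : ℝ) ≤ K := by exact_mod_cast hs
  by_cases h : ∃ j ∈ s, 1 / 2 < p j
  · obtain ⟨j, hj, hp⟩ := h
    rw [← Finset.add_sum_erase _ _ hj]
    have : ∑ i ∈ s.erase j, p i ≤ (s.erase j).card • (1 - p j) := by
      refine Finset.sum_le_card_nsmul _ _ _ fun i hi => ?_
      have := h2 i (Finset.mem_erase.1 hi).2 j hj (Finset.mem_erase.1 hi).1
      linarith
    rw [Finset.card_erase_of_mem hj, nsmul_eq_mul,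
      Nat.cast_sub (Finset.card_pos.2 ⟨j, hj⟩)] at this
    have h3 := h1 j hj
    push_cast at this
    nlinarith
  · push Not at h
    have := Finset.sum_le_card_nsmul s p (1/2) h
    rw [nsmul_eq_mul] at this
    linarith

lemma core {θ : ℝ} (h0 : 0 < θ) (h1 : θ ≤ 1 / 2) (a : ℕ+ → ℝ) (N : ℕ+) (hTS : TwoSet θ a N)
    (K : ℕ) (hK : 2 ≤ K) (hθK : θ * K ≤ 1) (hN : (N : ℕ) = K + 1)
    (hq1 : ∀ F, q θ a F ≤ 1) {η : ℝ} (hη : ∀ B : Finset ℕ+, (∀ x ∈ B, N < x) → q θ a B ≤ 1 - η)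
    {ε : ℝ} (hε1 : ε < η) (hε2 : ε < 1 - |a N|) (hε3 : ε < 1 / 6)
    {F : Finset ℕ+} (hF : ∀ x ∈ F, N ≤ x) (hq : 1 - ε < q θ a F) :
    K = 2 ∧ 1 - ε < 2 * θ ∧ ∃ G D₁ D₂ : Finset ℕ+, N ∈ G ∧ G ⊆ F ∧ D₁ ⊆ F ∧ D₂ ⊆ F ∧
      (∀ x ∈ G, ∀ y ∈ D₁, x < y) ∧ (∀ x ∈ G, ∀ y ∈ D₂, x < y) ∧ (∀ x ∈ D₁, ∀ y ∈ D₂, x < y) ∧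
      1 - 2 * ε < q θ a G ∧ 1 - 2 * ε < q θ a D₁ + q θ a D₂ := by
  classical
  have h1' : θ ≤ 1 := by linarith
  rcases q_attain h0 h1' a (by linarith) hq with ⟨i, hi, hc⟩ | ⟨d, E, hE, hEF, hc⟩
  · exfalso
    rcases (hF i hi).eq_or_lt with rfl | hl
    · linarith
    · have := hη {i} (by simpa using hl)
      have h2 : |a i| ≤ q θ a {i} := q_coord h0 h1' a (by simp)
      linarith
  have hs : ∀ i, ∀ x ∈ E i, N ≤ x := fun i x hx => hF x (hEF i hx)
  by_cases hj : ∃ j, N ∈ E j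
  swap
  · exfalso
    push Not at hj
    have h3 := q_wk h0 h1' a (F := Finset.univ.biUnion E) hE
      (fun i => Finset.subset_biUnion_of_mem E (Finset.mem_univ i))
    have h4 := hη (Finset.univ.biUnion E) (by
      intro x hx
      obtain ⟨i, -, hx⟩ := Finset.mem_biUnion.1 hx
      refine lt_of_le_of_ne (hs i x hx) ?_
      rintro rfl
      exact hj i hx)
    linarith
  obtain ⟨j, hj⟩ := hj
  obtain ⟨hemp, D, hD1, hD2, hD3, hD4⟩ := split_piece h0 h1' a hE hs hj
  have hd : d ≤ K + 1 := hN ▸ hE.2 j N hj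
  have hgt : ∀ i, i ≠ j → ∀ x ∈ E i, N < x := fun i hi x hx => hD3 N hj x (hD1 i hi hx)
  rw [← Finset.add_sum_erase _ _ (Finset.mem_univ j)] at hc
  have hP : ∑ i ∈ Finset.univ.erase j, q θ a (E i) ≤ (K : ℝ) / 2 := by
    refine pair_sum _ _ K hK ?_ (fun i _ => hq1 _) ?_
    · rw [Finset.card_erase_of_mem (Finset.mem_univ _), Finset.card_univ, Fintype.card_fin]
      omega
    · intro i hi k hk hik
      have hi := (Finset.mem_erase.1 hi).1
      have hk := (Finset.mem_erase.1 hk).1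
      rcases lt_or_gt_of_ne hik with hl | hl
      · exact hTS _ _ (hgt i hi) (hgt k hk) (hE.1 i k hl)
      · rw [add_comm]
        exact hTS _ _ (hgt k hk) (hgt i hi) (hE.1 k i hl)
  have hp := hq1 (E j)
  have hK2 : K = 2 := by
    by_contra hne
    have h3 : (3 : ℝ) ≤ K := by exact_mod_cast (show 3 ≤ K by omega)
    nlinarith
  subst hK2
  set P := ∑ i ∈ Finset.univ.erase j, q θ a (E i) with hPdef
  push_cast at hP hθK
  have hP : P ≤ 1 := by linarith
  have hP0 : 0 ≤ P := Finset.sum_nonneg fun i _ => q_nonneg h0 h1' a _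
  have hp0 := q_nonneg h0 h1' a (E j)
  have e1 : 1 - 2 * ε < q θ a (E j) := by nlinarith
  have e2 : 1 - 2 * ε < P := by nlinarith
  refine ⟨rfl, by nlinarith, ?_⟩
  suffices hh : ∃ D₁ D₂ : Finset ℕ+, D₁ ⊆ D ∧ D₂ ⊆ D ∧ (∀ x ∈ D₁, ∀ y ∈ D₂, x < y) ∧
      P = q θ a D₁ + q θ a D₂ by
    obtain ⟨D₁, D₂, k1, k2, k3, k4⟩ := hh
    have hDF : D ⊆ F := fun x hx => by
      obtain ⟨i, _, hx⟩ := hD2 x hx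
      exact hEF i hx
    exact ⟨E j, D₁, D₂, hj, hEF j, k1.trans hDF, k2.trans hDF,
      fun x hx y hy => hD3 x hx y (k1 hy), fun x hx y hy => hD3 x hx y (k2 hy), k3, e1, k4 ▸ e2⟩
  have hPs : P = (∑ i, q θ a (E i)) - q θ a (E j) := by
    rw [← Finset.add_sum_erase _ _ (Finset.mem_univ j)]; ring
  clear_value P
  have hd3 : d ≤ 3 := hd
  have qe := q_empty h0 h1' a
  interval_cases d
  · exact j.elim0
  · refine ⟨∅, ∅, by simp, by simp, by simp, ?_⟩
    rw [hPs]; fin_cases j; simp [qe]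
  · fin_cases j
    · refine ⟨E 1, ∅, hD1 1 (by simp), by simp, by simp, ?_⟩
      rw [hPs, Fin.sum_univ_two, qe]; simp
    · refine ⟨∅, ∅, by simp, by simp, by simp, ?_⟩
      have := hemp 0 (by simp)
      rw [hPs, Fin.sum_univ_two, this, qe]; simp
  · fin_cases j
    · refine ⟨E 1, E 2, hD1 1 (by simp), hD1 2 (by simp), hE.1 1 2 (by decide), ?_⟩
      rw [hPs, Fin.sum_univ_three]; simp; ring
    · refine ⟨E 2, ∅, hD1 2 (by simp), by simp, by simp, ?_⟩
      have := hemp 0 (by simp)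
      rw [hPs, Fin.sum_univ_three, this, qe]; simp
    · refine ⟨∅, ∅, by simp, by simp, by simp, ?_⟩
      have := hemp 0 (by simp)
      have h2 := hemp 1 (by simp)
      rw [hPs, Fin.sum_univ_three, this, h2, qe]; simp

lemma lemV {θ : ℝ} (h0 : 0 < θ) (h1 : θ ≤ 1 / 2) (a : ℕ+ → ℝ) (N : ℕ+) (hTS : TwoSet θ a N)
    (K : ℕ) (hK : 2 ≤ K) (hθK : θ * K ≤ 1) (hN : (N : ℕ) = K + 1)
    (hq1 : ∀ F, q θ a F ≤ 1) (hzero : ∀ i, i < N → a i = 0)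
    (hsup : ∀ ε > 0, ∃ B : Finset ℕ+, 1 - ε < q θ a B)
    (htri : ∀ G : Finset ℕ+, q θ a G ≤ |a N| + q θ a (G.erase N))
    {η : ℝ} (hη0 : 0 < η) (hη : ∀ B : Finset ℕ+, (∀ x ∈ B, N < x) → q θ a B ≤ 1 - η)
    (ha : |a N| < 1) : False := by
  classical
  have h1' : θ ≤ 1 := by linarith
  obtain ⟨ε, hε0, hε1, hε2, hε3⟩ : ∃ ε > 0, 9 * ε ≤ η ∧ 9 * ε ≤ 1 - |a N| ∧ 9 * ε ≤ 1 / 6 := by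
    have : 0 < min η (min (1 - |a N|) (1/6)) :=
      lt_min hη0 (lt_min (by linarith) (by norm_num))
    refine ⟨min η (min (1 - |a N|) (1/6)) / 9, by linarith, ?_, ?_, ?_⟩
    · linarith [min_le_left η (min (1 - |a N|) (1/6))]
    · linarith [min_le_right η (min (1 - |a N|) (1/6)), min_le_left (1 - |a N|) (1/6)]
    · linarith [min_le_right η (min (1 - |a N|) (1/6)), min_le_right (1 - |a N|) (1/6)]
  obtain ⟨F₀, hF₀⟩ := hsup ε hε0
  set F := F₀.filter fun x => N ≤ x with hFdef
  have hFs : ∀ x ∈ F, N ≤ x := fun x hx => (Finset.mem_filter.1 hx).2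
  have hq : 1 - ε < q θ a F := by
    have : rs a F = rs a F₀ := by
      ext i; simp only [rs_apply, hFdef, Finset.mem_filter]
      by_cases h2 : i ∈ F₀
      · by_cases h3 : N ≤ i
        · simp [h2, h3]
        · simp [h2, h3, hzero i (not_le.1 h3)]
      · simp [h2]
    rw [q, this]; exact hF₀
  obtain ⟨hK2, hθ2, G, D₁, D₂, g1, g2, g3, g4, g5, g6, g7, g8, g9⟩ :=
    core h0 h1 a N hTS K hK hθK hN hq1 hη (by linarith) (by linarith) (by linarith) hFs hq
  obtain ⟨-, -, G', D₁', D₂', k1, k2, k3, k4, k5, k6, k7, k8, k9⟩ :=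
    core h0 h1 a N hTS K hK hθK hN hq1 hη (ε := 2 * ε) (by linarith) (by linarith) (by linarith)
      (fun x hx => hFs x (g2 hx)) g8
  subst hK2
  set D := D₁' ∪ D₂' ∪ D₁ ∪ D₂ with hD
  have hDN : ∀ x ∈ D, ∀ y ∈ G', y < x := by
    intro x hx y hy
    simp only [hD, Finset.mem_union] at hx
    rcases hx with ((hx | hx) | hx) | hx
    · exact k5 y hy x hx
    · exact k6 y hy x hx
    · exact g5 y (k2 hy) x hx
    · exact g6 y (k2 hy) x hx
  have hW : Wk ![D₁', D₂', D₁, D₂] := by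
    constructor
    · intro i j hij
      fin_cases i <;> fin_cases j <;> first
        | (exfalso; revert hij; decide)
        | exact k7
        | exact g7
        | exact fun x hx y hy => g5 x (k3 hx) y hy
        | exact fun x hx y hy => g6 x (k3 hx) y hy
        | exact fun x hx y hy => g5 x (k4 hx) y hy
        | exact fun x hx y hy => g6 x (k4 hx) y hy
    · intro i x hx
      have hxD : x ∈ D := by
        simp only [hD, Finset.mem_union]
        fin_cases i <;> simp at hx <;> tauto
      have h3 := hDN x hxD N k1
      have h3' : (N : ℕ) < x := by exact_mod_cast h3
      omega
  have hqD := q_wk h0 h1' a (F := D) hW (by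
    intro i x hx
    simp only [hD, Finset.mem_union]
    fin_cases i <;> simp at hx <;> tauto)
  simp only [Fin.sum_univ_four] at hqD
  simp at hqD
  have hA : ∀ x ∈ G'.erase N, N < x := fun x hx =>
    lt_of_le_of_ne (hFs x (g2 (k2 (Finset.mem_erase.1 hx).2))) (Finset.mem_erase.1 hx).1.symm
  have h5 := hTS (G'.erase N) D hA (fun x hx => hDN x hx N k1)
    (fun x hx y hy => hDN y hy x (Finset.mem_erase.1 hx).2)
  have h6 := htri G'
  nlinarith

lemma two_set {θ : ℝ} (h0 : 0 < θ) (h1 : θ ≤ 1 / 2) (a : ℕ+ → ℝ) (N : ℕ+)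
    (K : ℕ) (hK : 2 ≤ K) (hθK : θ * K ≤ 1) (hN : (N : ℕ) = K + 1)
    (hT : ∀ y : ℕ+ →₀ ℝ, tnorm θ S1 y = 1 → ∀ F : Finset ℕ+, y.support ⊆ F →
      tnorm θ S1 (rs a F + y) ≤ θ * (K + 1) ∨ tnorm θ S1 (rs a F - y) ≤ θ * (K + 1))
    (hlim : ∀ ε > 0, ∃ M : ℕ+, ∀ m ≥ M, |a m| < ε) : TwoSet θ a N := by
  classical
  have h1' : θ ≤ 1 := by linarith
  intro A B hA hB hAB
  have hK0 : (0 : ℝ) < K := by exact_mod_cast (show 0 < K by omega)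
  refine le_of_forall_pos_le_add fun ε' hε' => ?_
  obtain ⟨ε, hε0, hεK⟩ : ∃ ε > 0, (K : ℝ) * ε = ε' :=
    ⟨ε' / K, by positivity, by field_simp⟩
  obtain ⟨M, hM⟩ := hlim ε hε0
  set L : ℕ+ := (A ∪ B).sup id + N + M with hL
  have hLlt : ∀ x ∈ A ∪ B, x < L := by
    intro x hx
    have h2 : x ≤ (A ∪ B).sup id := Finset.le_sup (f := id) hx
    rw [hL, add_assoc]
    exact lt_of_le_of_lt h2 (PNat.lt_add_right _ _)
  have hNL : N < L := by
    rw [hL, add_comm _ N, add_assoc]; exact PNat.lt_add_right _ _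
  have hML : M ≤ L := by
    rw [hL]; exact (PNat.lt_add_left _ _).le
  set m : Fin K → ℕ+ := fun j => ⟨L + j, by have := L.pos; omega⟩ with hm
  have hLm : ∀ j, L ≤ m j := fun j => by
    rw [← PNat.coe_le_coe]; simp [hm]
  have hmm : ∀ i j, i < j → m i < m j := fun i j hij => by
    rw [← PNat.coe_lt_coe]; simp [hm, hij]
  have hmi : Function.Injective m := by
    intro i j hij
    rcases lt_trichotomy i j with h | h | h
    · exact absurd hij (hmm i j h).ne
    · exact h
    · exact absurd hij (hmm j i h).ne'
  set Y : Finset ℕ+ := Finset.univ.image m with hY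
  have hYm : ∀ j, m j ∈ Y := fun j => Finset.mem_image_of_mem _ (Finset.mem_univ j)
  set y : ℕ+ →₀ ℝ := rs (fun _ => 1) Y with hy
  have hys : y.support ⊆ Y := by
    intro i hi
    rw [Finsupp.mem_support_iff, hy, rs_apply] at hi
    by_contra hc
    simp [hc] at hi
  have hyn : tnorm θ S1 y = 1 := by
    apply le_antisymm
    · refine tnorm_le_of_l1 h0 h1' y 1 (fun i => ?_) ?_
      · rw [hy, rs_apply]; split_ifs <;> simp
      · have : l1 y ≤ K := by
          rw [l1_eq hys]
          have e : ∀ i ∈ Y, |y i| = 1 := fun i hi => by rw [hy, rs_apply, if_pos hi]; simp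
          rw [Finset.sum_congr rfl e]
          have : Y.card ≤ K := Finset.card_image_le.trans (by simp)
          simpa using this
        nlinarith
    · have := coord_le h0 h1' y (m ⟨0, by omega⟩)
      rw [hy, rs_apply, if_pos (hYm _)] at this
      simpa using this
  have key : ∀ z : ℕ+ →₀ ℝ, (∀ x ∈ A ∪ B, z x = a x) → (∀ j, 1 - ε ≤ |z (m j)|) →
      θ * (q θ a A + (q θ a B + K * (1 - ε))) ≤ tnorm θ S1 z := by
    intro z hz1 hz2
    have hW : Wk (Fin.cons A (Fin.cons B fun j => {m j}) : Fin (K + 1 + 1) → Finset ℕ+) := by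
      constructor
      · intro i
        refine Fin.cases ?_ (fun i => ?_) i
        · intro j
          refine Fin.cases ?_ (fun j => ?_) j
          · intro h; exact absurd h (lt_irrefl _)
          · refine Fin.cases ?_ (fun j => ?_) j
            · intro _; simpa using hAB
            · intro _ x hx y hy
              simp at hx hy
              subst hy
              exact (hLlt x (by simp [hx])).trans_le (hLm j)
        · refine Fin.cases ?_ (fun i => ?_) i
          · intro j
            refine Fin.cases ?_ (fun j => ?_) j
            · intro h; exact absurd h (by simp)
            · refine Fin.cases ?_ (fun j => ?_) j
              · intro h; exact absurd h (lt_irrefl _)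
              · intro _ x hx y hy
                simp at hx hy
                subst hy
                exact (hLlt x (by simp [hx])).trans_le (hLm j)
          · intro j
            refine Fin.cases ?_ (fun j => ?_) j
            · intro h; exact absurd h (by simp)
            · refine Fin.cases ?_ (fun j => ?_) j
              · intro h; exact absurd h (by simp)
              · intro h x hx y hy
                simp at hx hy
                subst hx hy
                exact hmm _ _ (by simpa using h)
      · intro i x hx
        have hNx : N < x := by
          revert hx
          refine Fin.cases ?_ (fun i => ?_) i
          · intro hx; simp at hx; exact hA x hx
          · refine Fin.cases ?_ (fun i => ?_) i
            · intro hx; simp at hx; exact hB x hx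
            · intro hx; simp at hx; subst hx; exact hNL.trans_le (hLm i)
        have : (N : ℕ) < x := by exact_mod_cast hNx
        omega
    have h3 := wk_le h0 h1' z hW
    rw [Fin.sum_univ_succ, Fin.sum_univ_succ] at h3
    simp only [Fin.cons_zero, Fin.cons_succ] at h3
    have eA : tsProj A z = rs a A := by
      ext i; rw [tsProj_apply, rs_apply]
      split_ifs with h
      · exact hz1 i (by simp [h])
      · rfl
    have eB : tsProj B z = rs a B := by
      ext i; rw [tsProj_apply, rs_apply]
      split_ifs with h
      · exact hz1 i (by simp [h])
      · rfl
    rw [eA, eB] at h3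
    refine le_trans ?_ h3
    have h4 : (K : ℝ) * (1 - ε) ≤ ∑ j, tnorm θ S1 (tsProj {m j} z) := by
      have := Finset.card_nsmul_le_sum Finset.univ (fun j => tnorm θ S1 (tsProj {m j} z)) (1 - ε)
        (fun j _ => by
          refine (hz2 j).trans ?_
          have := coord_le h0 h1' (tsProj {m j} z) (m j)
          rwa [tsProj_apply, if_pos (by simp)] at this)
      simpa using this
    unfold q
    gcongr
  have hYAB : ∀ x ∈ A ∪ B, x ∉ Y := by
    intro x hx hxY
    obtain ⟨j, -, rfl⟩ := Finset.mem_image.1 hxY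
    exact absurd (hLm j) (not_le.2 (hLlt _ hx))
  have ham : ∀ j, |a (m j)| < ε := fun j => hM _ (hML.trans (hLm j))
  have hfin : θ * (q θ a A + (q θ a B + K * (1 - ε))) ≤ θ * (K + 1) := by
    rcases hT y hyn (A ∪ B ∪ Y) (hys.trans Finset.subset_union_right) with h | h
    · refine (key _ ?_ ?_).trans h
      · intro x hx
        have hx' : x ∈ A ∪ B ∪ Y := Finset.mem_union_left _ hx
        rw [Finsupp.add_apply, rs_apply, if_pos hx', hy, rs_apply, if_neg (hYAB x hx), add_zero]
      · intro j
        have hx' : m j ∈ A ∪ B ∪ Y := Finset.mem_union_right _ (hYm j)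
        rw [Finsupp.add_apply, rs_apply, if_pos hx', hy, rs_apply, if_pos (hYm j)]
        have := ham j
        rw [abs_lt] at this
        exact le_trans (by linarith) (le_abs_self _)
    · refine (key _ ?_ ?_).trans h
      · intro x hx
        have hx' : x ∈ A ∪ B ∪ Y := Finset.mem_union_left _ hx
        rw [Finsupp.sub_apply, rs_apply, if_pos hx', hy, rs_apply, if_neg (hYAB x hx), sub_zero]
      · intro j
        have hx' : m j ∈ A ∪ B ∪ Y := Finset.mem_union_right _ (hYm j)
        rw [Finsupp.sub_apply, rs_apply, if_pos hx', hy, rs_apply, if_pos (hYm j)]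
        have := ham j
        rw [abs_lt] at this
        exact le_trans (by linarith) (neg_le_abs _)
  have := le_of_mul_le_mul_left hfin h0
  rw [← hεK]
  linarith

lemma test_pair {θ : ℝ} (h0 : 0 < θ) (h1 : θ ≤ 1 / 2) (a : ℕ+ → ℝ)
    (K : ℕ) (hθK : θ * K ≤ 1)
    (hT : ∀ y : ℕ+ →₀ ℝ, tnorm θ S1 y = 1 → ∀ F : Finset ℕ+, y.support ⊆ F →
      tnorm θ S1 (rs a F + y) ≤ θ * (K + 1) ∨ tnorm θ S1 (rs a F - y) ≤ θ * (K + 1))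
    {n m : ℕ+} (hnm : n ≠ m) (han : |a n| = 1) : |a m| ≤ θ := by
  classical
  have h1' : θ ≤ 1 := by linarith
  have hsg : ∀ r : ℝ, ∃ σ : ℝ, |σ| = 1 ∧ |r + σ| = |r| + 1 := by
    intro r
    rcases le_total 0 r with h | h
    · exact ⟨1, by simp, by rw [abs_of_nonneg h, abs_of_nonneg (by linarith)]⟩
    · exact ⟨-1, by simp, by rw [abs_of_nonpos h, abs_of_nonpos (by linarith)]; ring⟩
  obtain ⟨σ, hσ1, hσ⟩ := hsg (a n)
  obtain ⟨τ, hτ1, hτ⟩ := hsg (a m)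
  by_contra hcon
  push Not at hcon
  set w : ℕ+ → ℝ := fun i => if i = n then σ else -τ with hw
  set y := rs w {n, m} with hy
  have hys : y.support ⊆ {n, m} := by
    intro i hi
    rw [Finsupp.mem_support_iff, hy, rs_apply] at hi
    by_contra hc
    simp [hc] at hi
  have hyn' : y n = σ := by simp [hy, rs_apply, hw]
  have hym' : y m = -τ := by simp [hy, rs_apply, hw, hnm.symm]
  have hyn : tnorm θ S1 y = 1 := by
    apply le_antisymm
    · refine tnorm_le_of_l1 h0 h1' y 1 (fun i => ?_) ?_
      · rw [hy, rs_apply, hw]; dsimp only; split_ifs <;> simp [hσ1, hτ1]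
      · rw [l1_eq hys, Finset.sum_pair hnm, hyn', hym', abs_neg, hσ1, hτ1]; linarith
    · have := coord_le h0 h1' y n
      rwa [hyn', hσ1] at this
  rcases hT y hyn {n, m} hys with h | h
  · have := (coord_le h0 h1' _ n).trans h
    rw [Finsupp.add_apply, hyn', rs_apply, if_pos (by simp), hσ, han] at this
    linarith
  · have := (coord_le h0 h1' _ m).trans h
    rw [Finsupp.sub_apply, hym', rs_apply, if_pos (by simp), sub_neg_eq_add, hτ] at this
    linarith

/-- Suppose `v` in the unit sphere of `T[θ, S₁]` has coordinates
vanishing on `{1, …, ⌊θ⁻¹⌋}` and `min(‖v + y‖, ‖v − y‖) ≤ θ(⌊θ⁻¹⌋ + 1)` for every `y`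
in the unit sphere. Then either `|v_{⌊θ⁻¹⌋+1}| = 1` with all other coordinates of
modulus `≤ θ`, or `v = ε e_m + a e_{⌊θ⁻¹⌋+1}` with `m ≥ ⌊θ⁻¹⌋ + 2`, `ε = ±1`, `|a| ≤ θ`. -/
theorem tsirelson_min_norm_small_char
    (θ : ℝ) (hθ0 : 0 < θ) (hθ : θ ≤ 1 / 2)
    (X : Type*) [NormedAddCommGroup X] [NormedSpace ℝ X] (e : ℕ+ → X)
    (hX : IsTsirelsonSpace θ 1 X e)
    (v : X) (hv : ‖v‖ = 1) (a : ℕ+ → ℝ) (ha : HasSum (fun i => a i • e i) v)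
    (hzero : ∀ i : ℕ+, (i : ℕ) ≤ ⌊θ⁻¹⌋₊ → a i = 0)
    (h : ∀ y : X, ‖y‖ = 1 → min ‖v + y‖ ‖v - y‖ ≤ θ * ((⌊θ⁻¹⌋₊ : ℝ) + 1)) :
    (|a ⟨⌊θ⁻¹⌋₊ + 1, Nat.succ_pos _⟩| = 1 ∧
      ∀ i : ℕ+, i ≠ ⟨⌊θ⁻¹⌋₊ + 1, Nat.succ_pos _⟩ → |a i| ≤ θ) ∨
    ∃ (m : ℕ+) (ε c : ℝ), ⌊θ⁻¹⌋₊ + 2 ≤ (m : ℕ) ∧ (ε = 1 ∨ ε = -1) ∧ |c| ≤ θ ∧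
      v = ε • e m + c • e ⟨⌊θ⁻¹⌋₊ + 1, Nat.succ_pos _⟩ := by
  classical
  have h1' : θ ≤ 1 := by linarith
  set K := ⌊θ⁻¹⌋₊ with hKdef
  set N : ℕ+ := ⟨K + 1, Nat.succ_pos _⟩ with hNdef
  have hN : (N : ℕ) = K + 1 := rfl
  have hθK : θ * K ≤ 1 := by
    have := Nat.floor_le (inv_nonneg.2 hθ0.le)
    calc θ * K ≤ θ * θ⁻¹ := by gcongr
      _ = 1 := mul_inv_cancel₀ hθ0.ne'
  have hK : 2 ≤ K := by
    apply Nat.le_floor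
    push_cast
    rw [le_inv_comm₀ (by norm_num) hθ0]
    linarith
  set J : (ℕ+ →₀ ℝ) → X := fun x => x.sum fun i c => c • e i with hJ
  have hJn : ∀ x, ‖J x‖ = tnorm θ S1 x := hX.norm_embed
  have hJadd : ∀ x y, J (x + y) = J x + J y := fun x y =>
    Finsupp.sum_add_index' (by simp) (by intros; rw [add_smul])
  have hJsub : ∀ x y, J (x - y) = J x - J y := fun x y => by
    have := hJadd (x - y) y
    rw [sub_add_cancel] at this
    rw [this, add_sub_cancel_right]
  have hJs : ∀ i c, J (Finsupp.single i c) = c • e i := fun i c => by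
    simp [hJ]
  have hJrs : ∀ F, J (rs a F) = ∑ i ∈ F, a i • e i := by
    intro F
    have hsub : (rs a F).support ⊆ F := Finsupp.support_onFinset_subset
    simp only [hJ]
    rw [Finsupp.sum_of_support_subset _ hsub _ (by simp)]
    refine Finset.sum_congr rfl fun i hi => ?_
    rw [rs_apply, if_pos hi]
  have hlimv : Filter.Tendsto (fun F => J (rs a F)) Filter.atTop (nhds v) := by
    simp_rw [hJrs]; exact ha
  have hqlim : Filter.Tendsto (fun F => q θ a F) Filter.atTop (nhds 1) := by
    have := hlimv.norm
    rw [hv] at this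
    simp only [hJn] at this
    exact this
  have hq1 : ∀ F, q θ a F ≤ 1 := fun F =>
    ge_of_tendsto hqlim ((Filter.eventually_ge_atTop F).mono fun G hG => q_mono hθ0 h1' a hG)
  have hsup : ∀ ε > 0, ∃ B : Finset ℕ+, 1 - ε < q θ a B := fun ε hε =>
    (hqlim.eventually (lt_mem_nhds (show 1 - ε < 1 by linarith))).exists
  have hT : ∀ y : ℕ+ →₀ ℝ, tnorm θ S1 y = 1 → ∀ F : Finset ℕ+, y.support ⊆ F →
      tnorm θ S1 (rs a F + y) ≤ θ * (K + 1) ∨ tnorm θ S1 (rs a F - y) ≤ θ * (K + 1) := by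
    intro y hy F hF
    have hy0 : ∀ i, i ∉ F → y i = 0 := fun i hi =>
      Finsupp.notMem_support_iff.1 fun hc => hi (hF hc)
    have hp : tnorm θ S1 (rs a F + y) ≤ ‖v + J y‖ := by
      have h2 : Filter.Tendsto (fun G => ‖J (rs a G) + J y‖) Filter.atTop (nhds ‖v + J y‖) :=
        (hlimv.add_const _).norm
      refine ge_of_tendsto h2 ((Filter.eventually_ge_atTop F).mono fun G hG => ?_)
      rw [← hJadd, hJn]
      refine tnorm_dom hθ0 h1' _ _ fun i => ?_
      by_cases hi : i ∈ F
      · simp [rs_apply, hi, show i ∈ G from hG hi]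
      · simp [rs_apply, hi, hy0 i hi]
    have hm : tnorm θ S1 (rs a F - y) ≤ ‖v - J y‖ := by
      have h2 : Filter.Tendsto (fun G => ‖J (rs a G) - J y‖) Filter.atTop (nhds ‖v - J y‖) :=
        (hlimv.sub_const _).norm
      refine ge_of_tendsto h2 ((Filter.eventually_ge_atTop F).mono fun G hG => ?_)
      rw [← hJsub, hJn]
      refine tnorm_dom hθ0 h1' _ _ fun i => ?_
      by_cases hi : i ∈ F
      · simp [rs_apply, hi, show i ∈ G from hG hi]
      · simp [rs_apply, hi, hy0 i hi]
    rcases min_le_iff.1 (h (J y) (by rw [hJn, hy])) with h3 | h3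
    · exact Or.inl (hp.trans h3)
    · exact Or.inr (hm.trans h3)
  have hlim : ∀ ε > 0, ∃ M : ℕ+, ∀ m ≥ M, |a m| < ε := by
    intro ε hε
    have h2 := ha.summable.tendsto_cofinite_zero.norm
    rw [norm_zero] at h2
    have h3 := h2.eventually (gt_mem_nhds hε)
    rw [Filter.eventually_cofinite] at h3
    obtain ⟨M, hM⟩ := h3.bddAbove
    refine ⟨M + 1, fun m hm => ?_⟩
    by_contra hc
    have : m ≤ M := hM (by
      intro hlt
      refine hc (lt_of_le_of_lt ?_ hlt)
      rw [← hJs, hJn]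
      have := coord_le hθ0 h1' (Finsupp.single m (a m)) m
      simpa using this)
    exact absurd (lt_of_lt_of_le (PNat.lt_add_right M 1) hm) (not_lt.2 this)
  have htri : ∀ G : Finset ℕ+, q θ a G ≤ |a N| + q θ a (G.erase N) := by
    intro G
    have h2 : tnorm θ S1 (Finsupp.single N (a N)) ≤ |a N| := by
      refine (tnorm_le_l1 hθ0 h1' _).trans (le_of_eq ?_)
      rw [l1_eq (s := {N}) Finsupp.support_single_subset]; simp
    have h3 : tnorm θ S1 (rs a G) ≤ tnorm θ S1 (Finsupp.single N (a N) + rs a (G.erase N)) := by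
      refine tnorm_dom hθ0 h1' _ _ fun i => ?_
      by_cases hi : i = N
      · rw [hi, Finsupp.add_apply, Finsupp.single_eq_same, rs_apply, rs_apply,
          if_neg (Finset.notMem_erase N G), add_zero]
        split_ifs
        · exact le_rfl
        · rw [abs_zero]; exact abs_nonneg _
      · simp [rs_apply, hi]
    have h4 : tnorm θ S1 (Finsupp.single N (a N) + rs a (G.erase N)) ≤
        tnorm θ S1 (Finsupp.single N (a N)) + tnorm θ S1 (rs a (G.erase N)) := by
      rw [← hJn, ← hJn, ← hJn, hJadd]; exact norm_add_le _ _
    unfold q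
    linarith
  have hz : ∀ i, i < N → a i = 0 := fun i hi => hzero i (by
    have : (i : ℕ) < N := by exact_mod_cast hi
    omega)
  have hTS := two_set hθ0 hθ a N K hK hθK hN hT hlim
  have haN : |a N| ≤ 1 := (q_coord hθ0 h1' a (Finset.mem_singleton_self N)).trans (hq1 _)
  rcases haN.lt_or_eq with hlt | heq
  · right
    have hsup2 : ∀ ε > 0, ∃ B : Finset ℕ+, (∀ x ∈ B, N < x) ∧ 1 - ε < q θ a B := by
      by_contra hcon
      push Not at hcon
      obtain ⟨η, hη0, hη⟩ := hcon
      exact lemV hθ0 hθ a N hTS K hK hθK hN hq1 hz hsup htri hη0 hη hlt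
    obtain ⟨m, hm, ham, hm0⟩ := lemU hθ0 hθ a N hTS hsup2
    refine ⟨m, a m, a N, ?_, ?_, ?_, ?_⟩
    · have : (N : ℕ) < m := by exact_mod_cast hm
      omega
    · rcases le_total 0 (a m) with h2 | h2
      · left; rwa [abs_of_nonneg h2] at ham
      · right; rw [abs_of_nonpos h2] at ham; linarith
    · exact test_pair hθ0 hθ a K hθK hT hm.ne' ham
    · have h2 : HasSum (fun i => a i • e i) (∑ i ∈ {m, N}, a i • e i) := by
        refine hasSum_sum_of_ne_finset_zero fun i hi => ?_
        simp only [Finset.mem_insert, Finset.mem_singleton, not_or] at hi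
        have : a i = 0 := by
          rcases lt_or_gt_of_ne hi.2 with h3 | h3
          · exact hz i h3
          · exact hm0 i h3 hi.1
        rw [this, zero_smul]
      rw [Finset.sum_pair hm.ne'] at h2
      exact ha.unique h2
  · left
    exact ⟨heq, fun i hi => test_pair hθ0 hθ a K hθK hT (Ne.symm hi) heq⟩
end
end
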